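/- arXiv:2308.12245 — 6 statements merged into one kernel-verified Lean document; each statement's English description precedes it below -/
import Mathlib

section
/- Fix d ≥ 2 and nonnegative integers a, b, c with a + b + c = d. Let M_k := sup{ζ_k^{(a,b,c)}(R) : R a d-dimensional cuboid with |R| = 1} and m_k := inf{ζ_k^{(a,b,c)}(R) : R a d-dimensional cuboid with |R| = 1}. Then: (1) if b < d then M_k = +∞ for every k ≥ 1; (2) if b > 0 then m_k = 0 for every k ≥ 1; (3) if b = 0 then m_k > 0 for every k ≥ 1 and there exists a cuboid R*_k with |R*_k| = 1 such that ζ_k^{(a,0,c)}(R*_k) = m_k. -/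
/-!
Everything follows from two comparison principles for the counting function that defines the
eigenvalues: exhibiting `k` distinct indices of energy at most `t` gives `ζ_k ≤ t`
(`eig_le_of_injective`), and a lower bound on all energies is a lower bound on `ζ_k`
(`le_eig`, and its multiplicative form `eig_scale`).

For unboundedness and for the vanishing infimum the same family of unit-volume cuboids is used: one
side of length `L^{-(d-1)}`, all other sides of length `L → ∞`. If the short side is not a Neumann
direction, every energy is at least `π² L^{2(d-1)} / 4`. If it is a Neumann direction, its ground
mode costs nothing, and `k` modes along a single long side already have energy `O(k² / L²)`.

If there is no Neumann direction, then `ζ_k(s) ≥ π² / (4 s_j²)` for every `j`. As some side of a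
unit-volume cuboid is at most `1`, the infimum is positive. Moreover the cuboids
doing at least as well as the unit cube have all sides bounded below, hence (by the volume
constraint) above, and so lie in a compact set. There `ζ_k` is lower semicontinuous by scaling: if
`s'` is coordinatewise at most `s / r`, then every energy for `s'` is at least `r²` times that for
`s`. Hence a minimizer exists.
-/

open scoped BigOperators

/-- The `k`-th (1-indexed) `(a,b,c)`-Zaremba eigenvalue of the cuboid
`(0,s 0) × ⋯ × (0,s (d-1))`, where the first `a` coordinate intervals carry Dirichlet
boundary conditions, the next `b` carry Neumann boundary conditions and the remaining
`c = d - a - b` carry Zaremba boundary conditions.  It is defined as the `k`-th smallest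
element, counted with multiplicity, of the family
`π² Σⱼ cⱼ(iⱼ) / (s j)²` over `i : Fin d → ℕ+`. -/
noncomputable def cuboidZarembaEig (d a b : ℕ) (s : Fin d → ℝ) (k : ℕ) : ℝ :=
  sInf {t : ℝ | (k : ℕ∞) ≤
    {i : Fin d → ℕ+ |
      Real.pi ^ 2 * ∑ j : Fin d,
        (if (j : ℕ) < a then ((i j : ℕ) : ℝ) ^ 2
         else if (j : ℕ) < a + b then (((i j : ℕ) : ℝ) - 1) ^ 2
         else (((i j : ℕ) : ℝ) - 1 / 2) ^ 2) / (s j) ^ 2 ≤ t}.encard}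

/-- The volume of the cuboid with side lengths `s`. -/
noncomputable def cuboidVolume (d : ℕ) (s : Fin d → ℝ) : ℝ := ∏ j : Fin d, s j

/-! ### Modes, energies and comparison principles -/

/-- The one-dimensional mode factor `cⱼ(n)`: `n²` (Dirichlet), `(n-1)²` (Neumann) or `(n-1/2)²`
(Zaremba), according to the position of the coordinate `j`. -/
noncomputable def modeFactor (a b j n : ℕ) : ℝ :=
  if j < a then (n : ℝ) ^ 2 else if j < a + b then ((n : ℝ) - 1) ^ 2 else ((n : ℝ) - 1 / 2) ^ 2

/-- The energy `E_R(i)` of the mode `i` on the cuboid with side lengths `s`. -/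
noncomputable def modeEnergy (d a b : ℕ) (s : Fin d → ℝ) (i : Fin d → ℕ+) : ℝ :=
  Real.pi ^ 2 * ∑ j : Fin d, modeFactor a b j (i j) / (s j) ^ 2

/-- The thresholds below which there are at least `k` modes; their infimum is the `k`-th
eigenvalue. -/
def thresholds (d a b : ℕ) (s : Fin d → ℝ) (k : ℕ) : Set ℝ :=
  {t : ℝ | (k : ℕ∞) ≤ {i : Fin d → ℕ+ | modeEnergy d a b s i ≤ t}.encard}

lemma eig_eq (d a b : ℕ) (s : Fin d → ℝ) (k : ℕ) :
    cuboidZarembaEig d a b s k = sInf (thresholds d a b s k) := rfl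

lemma modeFactor_nonneg (a b j n : ℕ) : 0 ≤ modeFactor a b j n := by
  unfold modeFactor; split_ifs <;> positivity

lemma modeFactor_le (a b j n : ℕ) (hn : 1 ≤ n) : modeFactor a b j n ≤ (n : ℝ) ^ 2 := by
  have : (1 : ℝ) ≤ n := by exact_mod_cast hn
  unfold modeFactor; split_ifs <;> nlinarith

lemma quarter_le_modeFactor (a b j n : ℕ) (hn : 1 ≤ n) (hj : j < a ∨ a + b ≤ j) :
    1 / 4 ≤ modeFactor a b j n := by
  have : (1 : ℝ) ≤ n := by exact_mod_cast hn
  unfold modeFactor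
  split_ifs
  · nlinarith
  · omega
  · nlinarith

lemma modeFactor_neumann_one (a b j : ℕ) (h1 : a ≤ j) (h2 : j < a + b) :
    modeFactor a b j 1 = 0 := by
  unfold modeFactor
  rw [if_neg (by omega), if_pos h2]
  norm_num

lemma modeEnergy_nonneg (d a b : ℕ) (s : Fin d → ℝ) (i : Fin d → ℕ+) :
    0 ≤ modeEnergy d a b s i :=
  mul_nonneg (by positivity)
    (Finset.sum_nonneg fun j _ => div_nonneg (modeFactor_nonneg _ _ _ _) (sq_nonneg _))

lemma exists_mode_le {d a b : ℕ} {s : Fin d → ℝ} {k : ℕ} (hk : 1 ≤ k) {t : ℝ}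
    (ht : t ∈ thresholds d a b s k) : ∃ i, modeEnergy d a b s i ≤ t := by
  have h : (1 : ℕ∞) ≤ {i : Fin d → ℕ+ | modeEnergy d a b s i ≤ t}.encard :=
    le_trans (by exact_mod_cast hk) ht
  exact Set.one_le_encard_iff_nonempty.mp h

lemma thresholds_nonneg {d a b : ℕ} {s : Fin d → ℝ} {k : ℕ} (hk : 1 ≤ k) {t : ℝ}
    (ht : t ∈ thresholds d a b s k) : 0 ≤ t := by
  obtain ⟨i, hi⟩ := exists_mode_le hk ht
  exact (modeEnergy_nonneg d a b s i).trans hi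

lemma mem_thresholds {d a b : ℕ} {s : Fin d → ℝ} {k : ℕ} {t : ℝ}
    (f : Fin k → (Fin d → ℕ+)) (hf : Function.Injective f)
    (h : ∀ n, modeEnergy d a b s (f n) ≤ t) : t ∈ thresholds d a b s k := by
  have h1 : (k : ℕ∞) ≤ (Set.range f).encard := by
    simpa using hf.encard_range
  exact h1.trans (Set.encard_le_encard (by rintro _ ⟨n, rfl⟩; exact h n))

lemma eig_le_of_injective {d a b : ℕ} {s : Fin d → ℝ} {k : ℕ} (hk : 1 ≤ k) {t : ℝ}
    (f : Fin k → (Fin d → ℕ+)) (hf : Function.Injective f)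
    (h : ∀ n, modeEnergy d a b s (f n) ≤ t) : cuboidZarembaEig d a b s k ≤ t :=
  csInf_le ⟨0, fun _ ht => thresholds_nonneg hk ht⟩ (mem_thresholds f hf h)

lemma thresholds_nonempty {d : ℕ} (hd : 2 ≤ d) (a b : ℕ) (s : Fin d → ℝ) (k : ℕ) :
    (thresholds d a b s k).Nonempty := by
  -- Any `k` distinct modes will do, with the sum of their energies as threshold.
  have : Nonempty (Fin d) := ⟨⟨0, by omega⟩⟩
  let g := Infinite.natEmbedding (Fin d → ℕ+)
  refine ⟨∑ n : Fin k, modeEnergy d a b s (g n),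
    mem_thresholds (fun n => g n) (fun x y h => Fin.ext (g.injective h)) fun n => ?_⟩
  exact Finset.single_le_sum (f := fun n : Fin k => modeEnergy d a b s (g n))
    (fun _ _ => modeEnergy_nonneg _ _ _ _ _) (Finset.mem_univ n)

lemma eig_nonneg {d a b : ℕ} {s : Fin d → ℝ} {k : ℕ} (hk : 1 ≤ k) :
    0 ≤ cuboidZarembaEig d a b s k :=
  Real.sInf_nonneg fun _ ht => thresholds_nonneg hk ht

lemma le_eig {d a b : ℕ} (hd : 2 ≤ d) {s : Fin d → ℝ} {k : ℕ} (hk : 1 ≤ k) {L : ℝ}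
    (h : ∀ i, L ≤ modeEnergy d a b s i) : L ≤ cuboidZarembaEig d a b s k := by
  refine le_csInf (thresholds_nonempty hd a b s k) fun t ht => ?_
  obtain ⟨i, hi⟩ := exists_mode_le hk ht
  exact (h i).trans hi

/-- A single non-Neumann side `s j` already forces every eigenvalue up. -/
lemma eig_lower {d a b : ℕ} (hd : 2 ≤ d) {s : Fin d → ℝ} {k : ℕ} (hk : 1 ≤ k)
    (j : Fin d) (hj : (j : ℕ) < a ∨ a + b ≤ j) :
    Real.pi ^ 2 * ((1 / 4) / (s j) ^ 2) ≤ cuboidZarembaEig d a b s k := by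
  refine le_eig hd hk fun i => ?_
  refine mul_le_mul_of_nonneg_left ?_ (by positivity)
  refine le_trans ?_ (Finset.single_le_sum (f := fun j : Fin d => modeFactor a b j (i j) / (s j) ^ 2)
    (fun j _ => div_nonneg (modeFactor_nonneg _ _ _ _) (sq_nonneg _)) (Finset.mem_univ j))
  exact div_le_div_of_nonneg_right (quarter_le_modeFactor _ _ _ _ (i j).2 hj) (sq_nonneg _)

lemma eig_scale {d a b : ℕ} (hd : 2 ≤ d) {s s' : Fin d → ℝ} {k : ℕ} (hk : 1 ≤ k) {r : ℝ}
    (hr : 0 < r) (hs : ∀ j, 0 < s j) (hs' : ∀ j, 0 < s' j) (h : ∀ j, s' j ≤ s j / r) :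
    r ^ 2 * cuboidZarembaEig d a b s k ≤ cuboidZarembaEig d a b s' k := by
  have hE : ∀ i, r ^ 2 * modeEnergy d a b s i ≤ modeEnergy d a b s' i := by
    intro i
    unfold modeEnergy
    rw [mul_left_comm, Finset.mul_sum]
    refine mul_le_mul_of_nonneg_left (Finset.sum_le_sum fun j _ => ?_) (by positivity)
    have h1 : r ^ 2 * (modeFactor a b j (i j) / s j ^ 2) =
        modeFactor a b j (i j) / (s j / r) ^ 2 := by
      have := (hs j).ne'
      field_simp
    rw [h1]
    have := hs' j
    exact div_le_div_of_nonneg_left (modeFactor_nonneg _ _ _ _) (by positivity)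
      (pow_le_pow_left₀ this.le (h j) 2)
  refine le_csInf (thresholds_nonempty hd a b s' k) fun t ht => ?_
  rw [mul_comm, ← le_div_iff₀ (by positivity)]
  refine csInf_le ⟨0, fun _ ht => thresholds_nonneg hk ht⟩ ?_
  refine le_trans ht (Set.encard_le_encard fun i hi => ?_)
  change modeEnergy d a b s i ≤ t / r ^ 2
  rw [le_div_iff₀ (by positivity), mul_comm]
  exact (hE i).trans hi

/-! ### Elongated unit-volume cuboids -/

/-- The cuboid with one short side `L^{-(d-1)}` in direction `j₀` and all others equal to `L`. -/
noncomputable def slab (d : ℕ) (j₀ : Fin d) (L : ℝ) : Fin d → ℝ :=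
  Function.update (fun _ => L) j₀ (L ^ (d - 1))⁻¹

lemma slab_pos {d : ℕ} (j₀ : Fin d) {L : ℝ} (hL : 0 < L) (j : Fin d) : 0 < slab d j₀ L j := by
  unfold slab
  by_cases h : j = j₀
  · subst h; simp only [Function.update_self]; positivity
  · simpa [Function.update_of_ne h] using hL

lemma slab_volume {d : ℕ} (j₀ : Fin d) {L : ℝ} (hL : 0 < L) :
    cuboidVolume d (slab d j₀ L) = 1 := by
  unfold cuboidVolume slab
  rw [Finset.prod_update_of_mem (Finset.mem_univ _), Finset.prod_const, Finset.card_sdiff]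
  simp only [Finset.card_univ, Fintype.card_fin, Finset.inter_univ, Finset.card_singleton]
  exact inv_mul_cancel₀ (by positivity)

lemma slab_eig_ge {d a b : ℕ} (hd : 2 ≤ d) {k : ℕ} (hk : 1 ≤ k) (j₀ : Fin d)
    (hj : (j₀ : ℕ) < a ∨ a + b ≤ j₀) {L : ℝ} (hL : 1 ≤ L) :
    L ≤ cuboidZarembaEig d a b (slab d j₀ L) k := by
  refine le_trans ?_ (eig_lower hd hk j₀ hj)
  have h1 : slab d j₀ L j₀ = (L ^ (d - 1))⁻¹ := by simp [slab]
  have h2 : L ≤ L ^ (d - 1) := le_self_pow₀ hL (by omega)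
  have hpi := Real.pi_gt_three
  have h3 : Real.pi ^ 2 * (1 / 4 / ((L ^ (d - 1))⁻¹) ^ 2) =
      Real.pi ^ 2 / 4 * (L ^ (d - 1)) ^ 2 := by
    field_simp
  rw [h1, h3]
  have h4 : 1 ≤ Real.pi ^ 2 / 4 := by nlinarith
  nlinarith

lemma slab_eig_le {d a b : ℕ} (hd : 2 ≤ d) {k : ℕ} (hk : 1 ≤ k) (j₀ : Fin d)
    (h1 : a ≤ j₀) (h2 : (j₀ : ℕ) < a + b) {L : ℝ} (hL : 0 < L) :
    cuboidZarembaEig d a b (slab d j₀ L) k ≤ Real.pi ^ 2 * (d * ((k : ℝ) ^ 2 / L ^ 2)) := by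
  have : Nontrivial (Fin d) := Fin.nontrivial_iff_two_le.mpr hd
  obtain ⟨j₁, hj₁⟩ := exists_ne j₀
  -- The ground mode in all directions but `j₁`, where the modes `1, …, k` are used.
  refine eig_le_of_injective hk
    (fun n => Function.update (fun _ => 1) j₁ (Nat.succPNat n)) ?_ fun n => ?_
  · intro x y hxy
    have := congrFun hxy j₁
    simp only [Function.update_self] at this
    exact Fin.ext (Nat.succPNat_injective this)
  · refine mul_le_mul_of_nonneg_left ?_ (by positivity)
    have hsum := Finset.sum_le_card_nsmul (Finset.univ : Finset (Fin d))
      (fun j => modeFactor a b j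
        ((Function.update (fun _ => (1 : ℕ+)) j₁ (Nat.succPNat n) : Fin d → ℕ+) j : ℕ) /
          (slab d j₀ L j) ^ 2) ((k : ℝ) ^ 2 / L ^ 2) ?_
    · simpa using hsum
    intro j _
    by_cases hj : j = j₀
    · subst hj
      simp only [Function.update_of_ne hj₁.symm, PNat.one_coe, modeFactor_neumann_one a b _ h1 h2,
        zero_div]
      positivity
    · have hs : slab d j₀ L j = L := by simp [slab, Function.update_of_ne hj]
      rw [hs]
      refine div_le_div_of_nonneg_right ?_ (sq_nonneg _)
      refine (modeFactor_le _ _ _ _ (PNat.pos _)).trans ?_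
      refine pow_le_pow_left₀ (by positivity) ?_ 2
      by_cases hj' : j = j₁
      · subst hj'
        simp only [Function.update_self]
        exact_mod_cast n.2
      · simp only [Function.update_of_ne hj']
        exact_mod_cast hk

/-! ### Existence of a minimizer without Neumann directions -/

/-- A lower bound `δ` on the sides of a unit-volume cuboid gives an upper bound. -/
lemma side_le {d : ℕ} {s : Fin d → ℝ} {δ : ℝ} (hδ : 0 < δ) (h : ∀ j, δ ≤ s j)
    (hv : cuboidVolume d s = 1) (j : Fin d) : s j ≤ (δ ^ (d - 1))⁻¹ := by
  unfold cuboidVolume at hv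
  rw [← Finset.mul_prod_erase _ _ (Finset.mem_univ j)] at hv
  have h1 : δ ^ (d - 1) ≤ ∏ i ∈ Finset.univ.erase j, s i := by
    have := Finset.prod_le_prod (s := Finset.univ.erase j) (f := fun _ => δ) (g := s)
      (fun _ _ => hδ.le) (fun i _ => h i)
    simpa [Finset.card_erase_of_mem] using this
  rw [le_inv_comm₀ (hδ.trans_le (h j)) (by positivity), ← eq_inv_of_mul_eq_one_right hv]
  exact h1

/-- Without Neumann directions, the `k`-th eigenvalue attains its minimum over all unit-volume
cuboids. -/
lemma exists_minimizer {d a b : ℕ} (hd : 2 ≤ d) (hb : b = 0) {k : ℕ} (hk : 1 ≤ k) :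
    ∃ s : Fin d → ℝ, (∀ j, 0 < s j) ∧ cuboidVolume d s = 1 ∧
      ∀ s' : Fin d → ℝ, (∀ j, 0 < s' j) → cuboidVolume d s' = 1 →
        cuboidZarembaEig d a b s k ≤ cuboidZarembaEig d a b s' k := by
  have hN : ∀ j : Fin d, (j : ℕ) < a ∨ a + b ≤ j := fun j => by omega
  have hpos : ∀ s : Fin d → ℝ, (∀ j, 0 < s j) → 0 < cuboidZarembaEig d a b s k := by
    intro s hs
    have := hs ⟨0, by omega⟩
    exact lt_of_lt_of_le (by positivity) (eig_lower hd hk ⟨0, by omega⟩ (hN _))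
  set M := cuboidZarembaEig d a b (fun _ => 1) k with hM
  have hM0 : 0 < M := hpos _ fun _ => one_pos
  -- With this `δ`, the bound `π² / (4 s_j²) ≤ M` reads `δ ≤ s_j`.
  set δ := Real.sqrt (Real.pi ^ 2 / (4 * M)) with hδdef
  have hδ : 0 < δ := Real.sqrt_pos.mpr (by positivity)
  have hside : ∀ s : Fin d → ℝ, (∀ j, 0 < s j) → cuboidZarembaEig d a b s k ≤ M →
      ∀ j, δ ≤ s j := by
    intro s hs hle j
    have h1 := (eig_lower hd hk j (hN j)).trans hle
    have hj := hs j
    rw [hδdef, Real.sqrt_le_left hj.le, div_le_iff₀ (by positivity)]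
    have h2 : Real.pi ^ 2 * (1 / 4 / s j ^ 2) = Real.pi ^ 2 / (4 * s j ^ 2) := by field_simp
    rw [h2, div_le_iff₀ (by positivity)] at h1
    linarith
  let K : Set (Fin d → ℝ) :=
    Set.Icc (fun _ => δ) (fun _ => (δ ^ (d - 1))⁻¹) ∩ {s | cuboidVolume d s = 1}
  have hKc : IsCompact K := by
    refine isCompact_Icc.inter_right (isClosed_eq ?_ continuous_const)
    unfold cuboidVolume
    fun_prop
  have hmem : ∀ s : Fin d → ℝ, (∀ j, 0 < s j) → cuboidVolume d s = 1 →
      cuboidZarembaEig d a b s k ≤ M → s ∈ K := by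
    intro s hs hv hle
    have := hside s hs hle
    exact ⟨⟨this, side_le hδ this hv⟩, hv⟩
  have hcube : (fun _ => 1 : Fin d → ℝ) ∈ K :=
    hmem _ (fun _ => one_pos) (by simp [cuboidVolume]) le_rfl
  have hKpos : ∀ s ∈ K, ∀ j, 0 < s j := fun s hs j => hδ.trans_le (hs.1.1 j)
  have hlsc : LowerSemicontinuousOn (fun s => cuboidZarembaEig d a b s k) K := by
    intro s hs y hy
    have hs0 := hKpos s hs
    -- A scaling factor `r < 1` so close to `1` that `r² ζ_k(s)` still exceeds `y`.
    obtain ⟨r, ⟨hr0, hr1⟩, hry⟩ : ∃ r : ℝ, r ∈ Set.Ioo 0 1 ∧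
        y < r ^ 2 * cuboidZarembaEig d a b s k := by
      have hcont : Filter.Tendsto (fun r : ℝ => r ^ 2 * cuboidZarembaEig d a b s k)
          (nhdsWithin 1 (Set.Iio 1)) (nhds (1 ^ 2 * cuboidZarembaEig d a b s k)) :=
        (Continuous.tendsto (by fun_prop) 1).mono_left nhdsWithin_le_nhds
      have h1 := hcont.eventually (lt_mem_nhds (by simpa using hy))
      have h2 : ∀ᶠ r : ℝ in nhdsWithin 1 (Set.Iio 1), r ∈ Set.Ioo (0 : ℝ) 1 :=
        Ioo_mem_nhdsLT one_pos
      exact (h2.and h1).exists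
    have hev : ∀ᶠ s' in nhds s, ∀ j, s' j < s j / r := by
      refine Filter.eventually_all.mpr fun j => ?_
      refine (continuous_apply j).continuousAt.eventually_lt_const ?_
      rw [lt_div_iff₀ hr0]
      exact mul_lt_of_lt_one_right (hs0 j) hr1
    filter_upwards [nhdsWithin_le_nhds hev, self_mem_nhdsWithin] with s' hs' hs'K
    exact hry.trans_le (eig_scale hd hk hr0 hs0 (hKpos s' hs'K) fun j => (hs' j).le)
  obtain ⟨s, hsK, hmin⟩ := hlsc.exists_isMinOn ⟨_, hcube⟩ hKc
  refine ⟨s, hKpos s hsK, hsK.2, fun s' hs' hv' => ?_⟩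
  rcases le_total (cuboidZarembaEig d a b s' k) M with h | h
  · exact hmin (hmem s' hs' hv' h)
  · exact le_trans (hmin hcube) h

/-! ### Extremal values over unit-volume cuboids -/

theorem statement_0 (d a b c : ℕ) (hd : 2 ≤ d) (habc : a + b + c = d)
    (k : ℕ) (hk : 1 ≤ k) :
    (b < d →
      ¬ BddAbove {t : ℝ | ∃ s : Fin d → ℝ, (∀ j, 0 < s j) ∧ cuboidVolume d s = 1 ∧
        cuboidZarembaEig d a b s k = t}) ∧
    (0 < b →
      sInf {t : ℝ | ∃ s : Fin d → ℝ, (∀ j, 0 < s j) ∧ cuboidVolume d s = 1 ∧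
        cuboidZarembaEig d a b s k = t} = 0) ∧
    (b = 0 →
      0 < sInf {t : ℝ | ∃ s : Fin d → ℝ, (∀ j, 0 < s j) ∧ cuboidVolume d s = 1 ∧
        cuboidZarembaEig d a b s k = t} ∧
      ∃ s : Fin d → ℝ, (∀ j, 0 < s j) ∧ cuboidVolume d s = 1 ∧
        cuboidZarembaEig d a b s k =
          sInf {t : ℝ | ∃ s' : Fin d → ℝ, (∀ j, 0 < s' j) ∧ cuboidVolume d s' = 1 ∧
            cuboidZarembaEig d a b s' k = t}) := by
  refine ⟨fun hbd hbdd => ?_, fun hb => ?_, fun hb => ?_⟩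
  · obtain ⟨B, hB⟩ := hbdd
    obtain ⟨j₀, hj₀⟩ : ∃ j : Fin d, (j : ℕ) < a ∨ a + b ≤ j := by
      rcases Nat.eq_zero_or_pos a with ha | ha
      · exact ⟨⟨d - 1, by omega⟩, Or.inr (by simp only; omega)⟩
      · exact ⟨⟨0, by omega⟩, Or.inl ha⟩
    have hL : 1 ≤ |B| + 1 := by linarith [abs_nonneg B]
    have h1 := hB ⟨slab d j₀ (|B| + 1), slab_pos j₀ (by linarith), slab_volume j₀ (by linarith), rfl⟩
    linarith [slab_eig_ge hd hk j₀ hj₀ hL, le_abs_self B]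
  · have hlb : ∀ t ∈ {t : ℝ | ∃ s : Fin d → ℝ, (∀ j, 0 < s j) ∧ cuboidVolume d s = 1 ∧
        cuboidZarembaEig d a b s k = t}, 0 ≤ t := by
      rintro _ ⟨s, -, -, rfl⟩
      exact eig_nonneg hk
    refine le_antisymm (le_of_forall_pos_le_add fun ε hε => ?_) (Real.sInf_nonneg hlb)
    let j₀ : Fin d := ⟨a, by omega⟩
    -- Large enough that `C / L² ≤ C / L ≤ ε`.
    set C := Real.pi ^ 2 * (d * (k : ℝ) ^ 2) with hC
    have hC0 : 0 ≤ C := by positivity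
    set L := C / ε + 1 with hLdef
    have hL1 : 1 ≤ L := by
      have : 0 ≤ C / ε := by positivity
      linarith
    have hL : 0 < L := by linarith
    refine (csInf_le ⟨0, hlb⟩ ⟨slab d j₀ L, slab_pos j₀ hL, slab_volume j₀ hL, rfl⟩).trans ?_
    refine (slab_eig_le hd hk j₀ le_rfl (by simp only [j₀]; omega) hL).trans ?_
    have h1 : Real.pi ^ 2 * (d * ((k : ℝ) ^ 2 / L ^ 2)) = C / L ^ 2 := by rw [hC]; ring
    rw [h1, zero_add, div_le_iff₀ (by positivity)]
    have h2 : C = ε * (L - 1) := by rw [hLdef]; field_simp; ring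
    rw [h2]
    exact mul_le_mul_of_nonneg_left (by nlinarith) hε.le
  · obtain ⟨s, hs, hv, hmin⟩ := exists_minimizer (a := a) hd hb hk
    have hleast : IsLeast {t : ℝ | ∃ s : Fin d → ℝ, (∀ j, 0 < s j) ∧ cuboidVolume d s = 1 ∧
        cuboidZarembaEig d a b s k = t} (cuboidZarembaEig d a b s k) := by
      refine ⟨⟨s, hs, hv, rfl⟩, ?_⟩
      rintro _ ⟨s', hs', hv', rfl⟩
      exact hmin s' hs' hv'
    rw [hleast.csInf_eq]
    refine ⟨?_, s, hs, hv, rfl⟩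
    have := hs ⟨0, by omega⟩
    exact lt_of_lt_of_le (by positivity) (eig_lower hd hk ⟨0, by omega⟩ (by simp only; omega))
end

section
/- Work in dimension d = 2 with (a,b,c) = (0,0,2). Suppose that for each k ≥ 1, a*_k ∈ (0,1] is such that the rectangle R*_k = (0,a*_k)×(0,1/a*_k) satisfies ζ_k^{(0,0,2)}(R*_k) ≤ ζ_k^{(0,0,2)}(R) for every rectangle R = (0,a)×(0,1/a) with a > 0 (i.e. R*_k minimises the k-th (0,0,2)-Zaremba eigenvalue among unit-area rectangles). Then for every β ≥ 4 and every integer k ≥ 1/4 + β²/(4−π)², one has a*_k < (β − √(β² − 16))/4. Moreover, for every k ≥ 22, a*_k < 4/((4−π)√(k − 1/4) + √((4−π)²(k − 1/4) − 16)); in particular a*_k → 0 as k → ∞. -/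
/-!
In units of `π²`, the first column `i = 1` of the thin rectangle with `a² = 1 / (2k - 1)` already
contains `k` eigenvalues at most `k - 1/2`, so the minimal `k`-th eigenvalue is at most `k - 1/2`.
This beats the Weyl asymptotics `N(λ) ≈ π λ / 4`: for a rectangle close to a square there are too
few eigenvalues below `k - 1/2`.

Quantitatively, the eigenvalues up to `λ` of `(0,a) × (0,1/a)` correspond to the points of
`(ℕ₊ - 1/2)²` in the quarter ellipse with semi-axes `a √λ` and `√λ / a`, and an integral comparison
(`lattice_count_le`) bounds their number by `π λ / 4 + (a + 1/a) √λ / 2 + 1 / 4`. For a minimiser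
this number is at least `k` for every `λ > k - 1/2`, which yields
`a + 1/a > (4 - π) √(k - 1/4) / 2` (`minimiser_spread`). As `a ≤ 1`, it lies below the smaller root
of the corresponding quadratic equation (`lt_small_root`); all three claims follow.
-/

open scoped BigOperators

/-- The area of a quarter of the unit disc. -/
lemma integral_quarter_disc : ∫ x in (0:ℝ)..1, √(1 - x ^ 2) = Real.pi / 4 := by
  have hc : Continuous fun x : ℝ => √(1 - x ^ 2) := by fun_prop
  have h := integral_sqrt_one_sub_sq
  rw [← intervalIntegral.integral_add_adjacent_intervals (b := (0:ℝ))
    (hc.intervalIntegrable _ _) (hc.intervalIntegrable _ _)] at h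
  have h2 : ∫ x in (-1:ℝ)..0, √(1 - x ^ 2) = ∫ x in (0:ℝ)..1, √(1 - x ^ 2) := by
    have := intervalIntegral.integral_comp_neg (a := 0) (b := 1) (fun x : ℝ => √(1 - x ^ 2))
    simpa using this.symm
  linarith

/-- The height at abscissa `x` of the quarter ellipse with semi-axes `A` and `B`, continued
by the constant `B` to negative abscissae; it is antitone on the whole line. -/
noncomputable def quarterHeight (A B x : ℝ) : ℝ := B * √(1 - (max x 0 / A) ^ 2)

lemma quarterHeight_antitone {A B : ℝ} (hA : 0 < A) (hB : 0 < B) :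
    Antitone (quarterHeight A B) := by
  intro x y hxy
  unfold quarterHeight
  gcongr

lemma quarterHeight_integral_le {A B : ℝ} (hA : 0 < A) (hB : 0 < B) {m : ℝ}
    (hm : m ≤ A) :
    ∫ x in (-1 / 2 : ℝ)..m, quarterHeight A B x ≤ B / 2 + Real.pi / 4 * (A * B) := by
  have hc : Continuous (quarterHeight A B) := by unfold quarterHeight; fun_prop
  have hi : ∀ a b, IntervalIntegrable (quarterHeight A B) MeasureTheory.volume a b :=
    fun a b => hc.intervalIntegrable a b
  have hnn : ∀ x, 0 ≤ quarterHeight A B x := fun x => by unfold quarterHeight; positivity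
  have h1 : ∫ x in (-1 / 2 : ℝ)..0, quarterHeight A B x = B / 2 := by
    rw [intervalIntegral.integral_congr (g := fun _ => B)]
    · simp; ring
    · intro x hx
      rw [Set.uIcc_of_le (by norm_num)] at hx
      simp [quarterHeight, max_eq_right hx.2]
  have h2 : ∫ x in (0 : ℝ)..A, quarterHeight A B x = Real.pi / 4 * (A * B) := by
    rw [intervalIntegral.integral_congr (g := fun x => B * √(1 - (x / A) ^ 2))]
    · rw [intervalIntegral.integral_const_mul,
        intervalIntegral.integral_comp_div (fun x : ℝ => √(1 - x ^ 2)) hA.ne', zero_div,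
        div_self hA.ne', integral_quarter_disc, smul_eq_mul]
      ring
    · intro x hx
      rw [Set.uIcc_of_le hA.le] at hx
      simp [quarterHeight, max_eq_left hx.1]
  have h3 : 0 ≤ ∫ x in m..A, quarterHeight A B x :=
    intervalIntegral.integral_nonneg hm fun x _ => hnn x
  have h4 := intervalIntegral.integral_add_adjacent_intervals (hi (-1 / 2) 0) (hi 0 m)
  have h5 := intervalIntegral.integral_add_adjacent_intervals (hi 0 m) (hi m A)
  linarith

/-- A lattice-point bound for the shifted lattice `(ℕ₊ - 1/2)²`: comparing column heights with
the integral of `quarterHeight` over `[-1/2, A]`, the number of points in the quarter ellipse with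
semi-axes `A`, `B` is at most `π A B / 4 + (A + B) / 2 + 1 / 4`. -/
lemma lattice_count_le {A B : ℝ} (hA : 0 < A) (hB : 0 < B) {k : ℕ}
    (hk : (k : ℕ∞) ≤ {i : Fin 2 → ℕ+ |
      ((((i 0 : ℕ+) : ℕ) : ℝ) - 1 / 2) ^ 2 / A ^ 2 +
        ((((i 1 : ℕ+) : ℕ) : ℝ) - 1 / 2) ^ 2 / B ^ 2 ≤ 1}.encard) :
    (k : ℝ) ≤ Real.pi / 4 * (A * B) + (A + B) / 2 + 1 / 4 := by
  set m : ℕ := ⌊A + 1 / 2⌋₊ with hm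
  set F : ℕ → ℝ := fun i => quarterHeight A B (-1 / 2 + ((i + 1 : ℕ) : ℝ)) with hF
  have hF0 : ∀ i, 0 ≤ F i := fun i => by simp only [hF, quarterHeight]; positivity
  set T : Finset (Σ _ : ℕ, ℕ) :=
    (Finset.range m).sigma fun i => Finset.range ⌊F i + 1 / 2⌋₊ with hT
  have hle : k ≤ T.card := by
    have h := hk.trans (Set.encard_le_encard_of_injOn (t := (T : Set (Σ _ : ℕ, ℕ)))
      (f := fun i : Fin 2 → ℕ+ => ⟨(i 0 : ℕ) - 1, (i 1 : ℕ) - 1⟩) ?_ ?_)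
    · rw [Set.encard_coe_eq_coe_finsetCard] at h
      exact_mod_cast h
    · intro p hp
      simp only [Set.mem_ofPred_eq] at hp
      obtain ⟨x, hx⟩ : ∃ x : ℕ, ((p 0 : ℕ+) : ℕ) = x + 1 :=
        ⟨_, (Nat.succ_pred_eq_of_pos (p 0).pos).symm⟩
      obtain ⟨y, hy⟩ : ∃ y : ℕ, ((p 1 : ℕ+) : ℕ) = y + 1 :=
        ⟨_, (Nat.succ_pred_eq_of_pos (p 1).pos).symm⟩
      rw [hx, hy] at hp
      push_cast at hp
      have hx0 : (0 : ℝ) ≤ x := Nat.cast_nonneg x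
      have hy0 : (0 : ℝ) ≤ y := Nat.cast_nonneg y
      have hxA : (x : ℝ) + 1 / 2 ≤ A := by
        have h1 : ((x : ℝ) + 1 - 1 / 2) ^ 2 / A ^ 2 ≤ 1 := by
          have : 0 ≤ ((y : ℝ) + 1 - 1 / 2) ^ 2 / B ^ 2 := by positivity
          linarith
        rw [div_le_one (by positivity)] at h1
        have := (abs_le.1 (abs_le_of_sq_le_sq h1 hA.le)).2
        linarith
      have hyF : (y : ℝ) + 1 / 2 ≤ F x := by
        have h1 : (((y : ℝ) + 1 / 2) / B) ^ 2 ≤ 1 - (((x : ℝ) + 1 / 2) / A) ^ 2 := by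
          rw [div_pow, div_pow]
          ring_nf at hp ⊢
          linarith
        have h2 := Real.le_sqrt_of_sq_le h1
        rw [div_le_iff₀ hB] at h2
        have h3 : (-1 / 2 + ((x + 1 : ℕ) : ℝ)) = x + 1 / 2 := by push_cast; ring
        simp only [hF, quarterHeight, h3]
        rw [max_eq_left (by positivity)]
        linarith
      simp only [hT, Finset.coe_sigma, Set.mem_sigma_iff, Finset.coe_range, Set.mem_Iio, hx, hy,
        Nat.add_sub_cancel]
      constructor
      · apply Nat.le_floor
        push_cast
        linarith
      · apply Nat.le_floor
        push_cast
        linarith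
    · intro p _ q _ h
      simp only [Sigma.mk.injEq, heq_eq_eq] at h
      have p0 := (p 0).pos
      have p1 := (p 1).pos
      have q0 := (q 0).pos
      have q1 := (q 1).pos
      have e0 : p 0 = q 0 := PNat.eq (by omega)
      have e1 : p 1 = q 1 := PNat.eq (by omega)
      funext j
      fin_cases j
      exacts [e0, e1]
  have hmA : (m : ℝ) ≤ A + 1 / 2 := Nat.floor_le (by positivity)
  have hcard : (T.card : ℝ) ≤ ∑ i ∈ Finset.range m, F i + m / 2 := by
    rw [hT, Finset.card_sigma]
    simp only [Finset.card_range]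
    push_cast
    calc ∑ i ∈ Finset.range m, (⌊F i + 1 / 2⌋₊ : ℝ)
        ≤ ∑ i ∈ Finset.range m, (F i + 1 / 2) :=
          Finset.sum_le_sum fun i _ => Nat.floor_le (by linarith [hF0 i])
      _ = _ := by rw [Finset.sum_add_distrib]; simp; ring
  have hsum : ∑ i ∈ Finset.range m, F i ≤ B / 2 + Real.pi / 4 * (A * B) := by
    rcases Nat.eq_zero_or_pos m with h0 | hpos
    · rw [h0]
      simp only [Finset.range_zero, Finset.sum_empty]
      positivity
    · have hm1 : (1 : ℝ) ≤ m := by exact_mod_cast hpos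
      exact (AntitoneOn.sum_le_integral ((quarterHeight_antitone hA hB).antitoneOn _)).trans
        (quarterHeight_integral_le hA hB (by linarith))
  have : (k : ℝ) ≤ T.card := by exact_mod_cast hle
  linarith

/-- The levels `t` such that at least `k` eigenvalues of `(0,a) × (0,1/a)` are at most `t`. -/
def levelSet (a : ℝ) (k : ℕ) : Set ℝ :=
  {t : ℝ | (k : ℕ∞) ≤ {i : Fin 2 → ℕ+ |
    Real.pi ^ 2 * (((((i 0 : ℕ+) : ℕ) : ℝ) - 1 / 2) ^ 2 / a ^ 2 +
      ((((i 1 : ℕ+) : ℕ) : ℝ) - 1 / 2) ^ 2 / a⁻¹ ^ 2) ≤ t}.encard}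

lemma eig_eq_s1 (a : ℝ) (k : ℕ) :
    cuboidZarembaEig 2 0 0 ![a, a⁻¹] k = sInf (levelSet a k) := by
  simp [cuboidZarembaEig, levelSet, Fin.sum_univ_two]

lemma levelSet_bddBelow (a : ℝ) {k : ℕ} (hk : 1 ≤ k) : BddBelow (levelSet a k) := by
  refine ⟨0, fun t ht => ?_⟩
  have h1 : (1 : ℕ∞) ≤ _ := le_trans (by exact_mod_cast hk) ht
  obtain ⟨i, hi⟩ := Set.one_le_encard_iff_nonempty.1 h1
  exact le_trans (by positivity) hi

/-- The first column `{1} × {1, …, k}` already provides `k` eigenvalues up to the stated level. -/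
lemma mem_levelSet (a : ℝ) (k : ℕ) :
    Real.pi ^ 2 * (1 / 4 / a ^ 2 + ((k : ℝ) - 1 / 2) ^ 2 * a ^ 2) ∈ levelSet a k := by
  have h := Set.encard_le_encard_of_injOn (s := ((Finset.range k : Finset ℕ) : Set ℕ))
    (t := {i : Fin 2 → ℕ+ |
    Real.pi ^ 2 * (((((i 0 : ℕ+) : ℕ) : ℝ) - 1 / 2) ^ 2 / a ^ 2 +
      ((((i 1 : ℕ+) : ℕ) : ℝ) - 1 / 2) ^ 2 / a⁻¹ ^ 2) ≤
        Real.pi ^ 2 * (1 / 4 / a ^ 2 + ((k : ℝ) - 1 / 2) ^ 2 * a ^ 2)})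
    (f := fun n => ![1, n.succPNat]) ?_ ?_
  · rw [Set.encard_coe_eq_coe_finsetCard, Finset.card_range] at h
    exact h
  · intro n hn
    have hn' : (n : ℝ) + 1 ≤ k := by
      have : n < k := by simpa using hn
      exact_mod_cast this
    have hn0 : (0 : ℝ) ≤ n := Nat.cast_nonneg n
    simp only [Set.mem_ofPred_eq, Matrix.cons_val_zero, Matrix.cons_val_one, PNat.one_coe,
      Nat.succPNat_coe, Nat.succ_eq_add_one, Nat.cast_one, inv_pow, div_inv_eq_mul]
    push_cast
    have h1 : ((n : ℝ) + 1 - 1 / 2) ^ 2 ≤ ((k : ℝ) - 1 / 2) ^ 2 :=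
      pow_le_pow_left₀ (by linarith) (by linarith) 2
    have h2 : ((1 : ℝ) - 1 / 2) ^ 2 = 1 / 4 := by norm_num
    rw [h2]
    gcongr
  · intro x _ y _ hxy
    have := congrFun hxy 1
    simpa using this

/-- A minimiser is far from the square: `a + 1/a` exceeds `(4 - π) √(k - 1/4) / 2`. -/
lemma minimiser_spread {a : ℝ} (ha : 0 < a) {k : ℕ} (hk : 1 ≤ k)
    (hmin : ∀ b : ℝ, 0 < b →
      cuboidZarembaEig 2 0 0 ![a, a⁻¹] k ≤ cuboidZarembaEig 2 0 0 ![b, b⁻¹] k) :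
    (4 - Real.pi) * √((k : ℝ) - 1 / 4) / 2 < a + a⁻¹ := by
  have hk1 : (1 : ℝ) ≤ k := by exact_mod_cast hk
  have hpi := Real.pi_pos
  -- `b² = 1 / (2 (k - 1/2))` maximises the number of eigenvalues in the first column.
  have hup : sInf (levelSet a k) ≤ Real.pi ^ 2 * ((k : ℝ) - 1 / 2) := by
    have hl : (0 : ℝ) < 2 * ((k : ℝ) - 1 / 2) := by linarith
    have hb : 0 < (√(2 * ((k : ℝ) - 1 / 2)))⁻¹ := inv_pos.2 (Real.sqrt_pos.2 hl)
    have h := hmin _ hb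
    rw [eig_eq_s1, eig_eq_s1] at h
    refine h.trans ((csInf_le (levelSet_bddBelow _ hk) (mem_levelSet _ _)).trans_eq ?_)
    rw [inv_pow, Real.sq_sqrt hl.le]
    field_simp
    ring
  -- The infimum need not be known to be attained, so a level strictly between
  -- `k - 1/2` and `k - 1/4` is used.
  set L : ℝ := (k : ℝ) - 3 / 8 with hL
  have hL0 : 0 < L := by linarith
  obtain ⟨t, ht, htL⟩ := exists_lt_of_csInf_lt ⟨_, mem_levelSet _ _⟩
    (hup.trans_lt (show _ < Real.pi ^ 2 * L by gcongr; linarith))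
  have hs : 0 < √L := Real.sqrt_pos.2 hL0
  have hs2 : √L ^ 2 = L := Real.sq_sqrt hL0.le
  have hcount : (k : ℝ) ≤ Real.pi / 4 * ((a * √L) * (a⁻¹ * √L)) +
      (a * √L + a⁻¹ * √L) / 2 + 1 / 4 := by
    apply lattice_count_le (by positivity) (by positivity)
    refine le_trans ht (Set.encard_le_encard fun i hi => ?_)
    simp only [Set.mem_ofPred_eq] at hi ⊢
    have h1 := le_of_mul_le_mul_left (hi.trans htL.le) (by positivity)
    rw [mul_pow, mul_pow, hs2, ← div_div, ← div_div, ← add_div, div_le_one hL0]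
    exact h1
  have harea : (a * √L) * (a⁻¹ * √L) = L := by
    rw [mul_mul_mul_comm, mul_inv_cancel₀ ha.ne', one_mul, Real.mul_self_sqrt hL0.le]
  rw [harea] at hcount
  set M : ℝ := (k : ℝ) - 1 / 4 with hM
  have hM0 : 0 < M := by linarith
  have hr : 0 < √M := Real.sqrt_pos.2 hM0
  have hr2 : √M ^ 2 = M := Real.sq_sqrt hM0.le
  have hle : √L ≤ √M := Real.sqrt_le_sqrt (by linarith)
  have hai : 0 < a + a⁻¹ := by positivity
  have h1 : (a + a⁻¹) * √L ≤ (a + a⁻¹) * √M := by gcongr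
  have h2 : Real.pi * L < Real.pi * M := by gcongr; linarith
  have h3 : (4 - Real.pi) * √M / 2 * √M < (a + a⁻¹) * √M := by
    have : (4 - Real.pi) * √M / 2 * √M = (4 - Real.pi) / 2 * M := by
      rw [← hr2]; simp only [Real.sqrt_sq hr.le]; ring
    rw [this]
    linarith
  exact lt_of_mul_lt_mul_right h3 hr.le

/-- `(β - √(β² - 16)) / 4` is the smaller root of `x + 1/x = β/2`; the roots have product `1`,
so the larger one is at least `1`. -/
lemma lt_small_root {a β : ℝ} (ha : 0 < a) (ha1 : a ≤ 1) (hβ : 4 ≤ β)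
    (h : β / 2 < a + a⁻¹) : a < (β - √(β ^ 2 - 16)) / 4 := by
  by_contra! hc
  have hs0 := Real.sqrt_nonneg (β ^ 2 - 16)
  have hs : √(β ^ 2 - 16) ^ 2 = β ^ 2 - 16 := Real.sq_sqrt (by nlinarith)
  have h1 : β / 2 * a < a ^ 2 + 1 := by
    have := mul_lt_mul_of_pos_right h ha
    rwa [add_mul, inv_mul_cancel₀ ha.ne', ← sq] at this
  nlinarith [mul_nonneg (sub_nonneg.2 hc)
    (show 0 ≤ (β + √(β ^ 2 - 16)) / 4 - a by linarith)]

theorem statement_1 (astar : ℕ → ℝ)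
    (hmem : ∀ k, 1 ≤ k → 0 < astar k ∧ astar k ≤ 1)
    (hmin : ∀ k, 1 ≤ k → ∀ a : ℝ, 0 < a →
      cuboidZarembaEig 2 0 0 ![astar k, (astar k)⁻¹] k ≤
        cuboidZarembaEig 2 0 0 ![a, a⁻¹] k) :
    (∀ β : ℝ, 4 ≤ β → ∀ k : ℕ, 1 / 4 + β ^ 2 / (4 - Real.pi) ^ 2 ≤ (k : ℝ) →
      astar k < (β - Real.sqrt (β ^ 2 - 16)) / 4) ∧
    (∀ k : ℕ, 22 ≤ k →
      astar k < 4 / ((4 - Real.pi) * Real.sqrt ((k : ℝ) - 1 / 4) +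
        Real.sqrt ((4 - Real.pi) ^ 2 * ((k : ℝ) - 1 / 4) - 16))) ∧
    Filter.Tendsto astar Filter.atTop (nhds 0) := by
  have hpi : 0.858 < 4 - Real.pi := by linarith [Real.pi_lt_d4]
  have hpi0 : 0 < 4 - Real.pi := by linarith
  have part1 : ∀ β : ℝ, 4 ≤ β → ∀ k : ℕ, 1 / 4 + β ^ 2 / (4 - Real.pi) ^ 2 ≤ (k : ℝ) →
      astar k < (β - Real.sqrt (β ^ 2 - 16)) / 4 := by
    intro β hβ k hk
    have hkpos : 1 ≤ k := by
      have h0 : (0 : ℝ) < k := lt_of_lt_of_le (by positivity) hk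
      exact_mod_cast h0
    obtain ⟨ha, ha1⟩ := hmem k hkpos
    have hsp := minimiser_spread ha hkpos (hmin k hkpos)
    apply lt_small_root ha ha1 hβ
    have h1 : β / (4 - Real.pi) ≤ √((k : ℝ) - 1 / 4) := by
      apply Real.le_sqrt_of_sq_le
      rw [div_pow]
      linarith
    rw [div_le_iff₀ hpi0] at h1
    linarith
  have part2 : ∀ k : ℕ, 22 ≤ k →
      astar k < 4 / ((4 - Real.pi) * Real.sqrt ((k : ℝ) - 1 / 4) +
        Real.sqrt ((4 - Real.pi) ^ 2 * ((k : ℝ) - 1 / 4) - 16)) := by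
    intro k hk
    have hk' : (22 : ℝ) ≤ k := by exact_mod_cast hk
    have hsq : ((4 - Real.pi) * √((k : ℝ) - 1 / 4)) ^ 2 =
        (4 - Real.pi) ^ 2 * ((k : ℝ) - 1 / 4) := by
      rw [mul_pow, Real.sq_sqrt (by linarith)]
    have h16 : 16 ≤ (4 - Real.pi) ^ 2 * ((k : ℝ) - 1 / 4) := by
      calc (16 : ℝ) ≤ 0.858 ^ 2 * (22 - 1 / 4) := by norm_num
        _ ≤ _ := by gcongr
    set γ : ℝ := (4 - Real.pi) * √((k : ℝ) - 1 / 4) with hγ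
    have hγ0 : 0 ≤ γ := by positivity
    have hγ4 : 4 ≤ γ := by nlinarith
    have h := part1 γ hγ4 k (by rw [hsq]; field_simp; linarith)
    rw [hsq] at h
    refine h.trans_eq ?_
    have hs := Real.sq_sqrt (sub_nonneg.2 h16)
    have hs0 := Real.sqrt_nonneg ((4 - Real.pi) ^ 2 * ((k : ℝ) - 1 / 4) - 16)
    rw [div_eq_div_iff (by norm_num) (by positivity)]
    nlinarith
  refine ⟨part1, part2, ?_⟩
  have hlim : Filter.Tendsto (fun k : ℕ => 4 / ((4 - Real.pi) * √((k : ℝ) - 1 / 4)))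
      Filter.atTop (nhds 0) := by
    apply Filter.Tendsto.const_div_atTop
    apply Filter.Tendsto.const_mul_atTop hpi0
    apply Real.tendsto_sqrt_atTop.comp
    exact Filter.tendsto_atTop_add_const_right _ _ tendsto_natCast_atTop_atTop
  refine squeeze_zero' ?_ ?_ hlim
  · filter_upwards [Filter.eventually_ge_atTop 1] with k hk using (hmem k hk).1.le
  · filter_upwards [Filter.eventually_ge_atTop 22] with k hk
    have hk' : (22 : ℝ) ≤ k := by exact_mod_cast hk
    have : 0 < √((k : ℝ) - 1 / 4) := Real.sqrt_pos.2 (by linarith)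
    refine (part2 k hk).le.trans ?_
    gcongr
    exact le_add_of_nonneg_right (Real.sqrt_nonneg _)
end

section
/- Fix d ≥ 3 and nonnegative integers a, c with a + c = d (so b = 0). For every k ≥ 1 there exists a cuboid R_k = (0,a₁^{(k)})×⋯×(0,a_d^{(k)}) with |∂R_k| = 1 such that ζ_k^{(a,0,c)}(R_k) = inf{ζ_k^{(a,0,c)}(R) : R a d-dimensional cuboid with |∂R| = 1}. Moreover, for any such sequence of minimisers, a_j^{(k)} → (2d)^{−1/(d−1)} as k → ∞ for each j = 1,…,d; that is, the minimisers converge to the cube of unit perimeter. -/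
/-!
Write `V(s)` for the volume, `ζ = π² ρ²` for the eigenvalue, and `C(s)` for the Euclidean norm of
`(1 / s j)_j`.  The admissible indices with eigenvalue at most `π² r²` are shifted lattice points in
an octant of an ellipsoid.  Comparing them with their unit cells gives the explicit bounds
`ω V(s) (r - C(s))^d ≤ N(s, r) ≤ ω V(s) (r + C(s))^d` (`encard_idx_le`, `le_encard_idx`), and
hence the Weyl bounds `le_eigRad` and `eigRad_le` on `ρ`.  Since no Neumann direction is present,
every term of every eigenvalue is at least `π² / (4 s j ^ 2)`, whence `C(s) ≤ 2 ρ`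
(`diagLen_le_eigRad`).

Existence (`exists_min`): a cuboid at least as good as the cube has sides bounded below, and then,
as `d ≥ 3` and the perimeter is `1`, also bounded above; on this compact set the eigenvalue is lower
semicontinuous by monotonicity and scaling (`shiftEig_le_mul`).

Convergence (`tendsto_volume`): a minimiser `S` satisfies `ρ(S) ≤ ρ(Q)`, where `Q` is the cube, so
the Weyl bounds give `V(S) / V(Q) ≥ ((ρ(Q) - C(Q)) / (ρ(Q) + C(S)))^d` (`volume_compare`).  As
`C(S) ≤ 2 ρ(Q)`, the volume of `S` is bounded below, so by the perimeter constraint its sides are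
bounded below and `C(S)` is bounded; now the same inequality gives `liminf V(S) / V(Q) ≥ 1`.  The
quantitative isoperimetric inequality `isoperimetric` gives `V(S) ≤ V(Q)`, and forces the sides to
converge once the volumes do (`tendsto_side_of_tendsto_volume`).
-/


open scoped BigOperators

/-- The perimeter (surface measure of the boundary) of the cuboid with side lengths `s`:
`2 Σⱼ Πᵢ≠ⱼ s i`. -/
noncomputable def cuboidPerimeter (d : ℕ) (s : Fin d → ℝ) : ℝ :=
  2 * ∑ j : Fin d, ∏ i ∈ Finset.univ.erase j, s i

/-- `s` describes a cuboid of unit perimeter minimising the `k`-th `(a,0,c)`-Zaremba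
eigenvalue among all cuboids of unit perimeter. -/
def PerimMinimizer (d a b k : ℕ) (s : Fin d → ℝ) : Prop :=
  (∀ j, 0 < s j) ∧ cuboidPerimeter d s = 1 ∧
  ∀ s' : Fin d → ℝ, (∀ j, 0 < s' j) → cuboidPerimeter d s' = 1 →
    cuboidZarembaEig d a b s k ≤ cuboidZarembaEig d a b s' k

/-! ### Ellipsoids and lattice cells -/

/-- The part of the ellipsoid with semi-axes `r * s j` lying in the closed positive orthant. -/
def orth {d : ℕ} (s : Fin d → ℝ) (r : ℝ) : Set (Fin d → ℝ) :=
  {x | (∀ j, 0 ≤ x j) ∧ ∑ j, (x j / s j) ^ 2 ≤ r ^ 2}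

/-- The volume of the part of the Euclidean unit ball lying in the positive orthant. -/
noncomputable def orthVol (d : ℕ) : ℝ :=
  (MeasureTheory.volume (orth (fun _ : Fin d => (1 : ℝ)) 1)).toReal

lemma volume_orth_one_lt_top (d : ℕ) :
    MeasureTheory.volume (orth (fun _ : Fin d => (1 : ℝ)) 1) < ⊤ := by
  refine lt_of_le_of_lt (MeasureTheory.measure_mono (t := Set.Icc (0 : Fin d → ℝ) 1) ?_) ?_
  · rintro x ⟨hx0, hx⟩
    refine ⟨fun j => hx0 j, fun j => ?_⟩
    have h1 : (x j / 1) ^ 2 ≤ ∑ j, (x j / 1) ^ 2 :=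
      Finset.single_le_sum (f := fun j => (x j / 1) ^ 2) (fun _ _ => sq_nonneg _)
        (Finset.mem_univ j)
    have h2 : (x j) ^ 2 ≤ 1 := by
      simp only [div_one] at h1 hx
      linarith
    simp only [Pi.one_apply]
    nlinarith [hx0 j]
  · exact isCompact_Icc.measure_lt_top

lemma orthVol_pos {d : ℕ} (hd : 1 ≤ d) : 0 < orthVol d := by
  have hd' : (1 : ℝ) ≤ d := by exact_mod_cast hd
  refine ENNReal.toReal_pos ?_ (volume_orth_one_lt_top d).ne
  -- the cube of side `1 / d` fits inside
  have hsub : Set.Icc (0 : Fin d → ℝ) (fun _ => 1 / (d : ℝ)) ⊆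
      orth (fun _ : Fin d => (1 : ℝ)) 1 := by
    rintro x ⟨h0, h1⟩
    refine ⟨fun j => h0 j, ?_⟩
    have : ∑ j, (x j / 1) ^ 2 ≤ ∑ _j : Fin d, 1 / (d : ℝ) := by
      refine Finset.sum_le_sum fun j _ => ?_
      have a0 : 0 ≤ x j := h0 j
      have a1 : x j ≤ 1 / (d : ℝ) := h1 j
      have a2 : 1 / (d : ℝ) ≤ 1 := by rw [div_le_one (by linarith)]; exact hd'
      rw [div_one]
      nlinarith
    refine this.trans ?_
    simp only [Finset.sum_const, Finset.card_univ, Fintype.card_fin, nsmul_eq_mul]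
    rw [mul_one_div_cancel (by linarith)]
    norm_num
  refine (lt_of_lt_of_le ?_ (MeasureTheory.measure_mono hsub)).ne'
  rw [Real.volume_Icc_pi]
  refine pos_iff_ne_zero.2 (Finset.prod_ne_zero_iff.2 fun j _ => ?_)
  simp only [Pi.zero_apply, sub_zero, ne_eq, ENNReal.ofReal_eq_zero, not_le]
  positivity

lemma volume_orth {d : ℕ} {s : Fin d → ℝ} (hs : ∀ j, 0 < s j) {r : ℝ} (hr : 0 < r) :
    MeasureTheory.volume (orth s r) =
      ENNReal.ofReal (orthVol d * (∏ j, s j) * r ^ d) := by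
  have hV : 0 < ∏ j, s j := Finset.prod_pos fun j _ => hs j
  have hdet : Matrix.det (Matrix.diagonal fun j => (r * s j)⁻¹) = ((∏ j, s j) * r ^ d)⁻¹ := by
    rw [Matrix.det_diagonal, Finset.prod_inv_distrib, Finset.prod_mul_distrib]
    simp [mul_comm]
  have hpre : orth s r =
      (Matrix.toLin' (Matrix.diagonal fun j => (r * s j)⁻¹)) ⁻¹'
        (orth (fun _ : Fin d => (1 : ℝ)) 1) := by
    ext x
    simp only [orth, Set.mem_ofPred_eq, Set.mem_preimage, Matrix.toLin'_apply,
      Matrix.mulVec_diagonal, div_one]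
    refine and_congr (forall_congr' fun j => ?_) ?_
    · exact (mul_nonneg_iff_of_pos_left (inv_pos.2 (mul_pos hr (hs j)))).symm
    · have : ∑ j, ((r * s j)⁻¹ * x j) ^ 2 = (∑ j, (x j / s j) ^ 2) / r ^ 2 := by
        rw [Finset.sum_div]
        refine Finset.sum_congr rfl fun j _ => ?_
        have := (hs j).ne'
        field_simp
      rw [this, one_pow, div_le_one (by positivity)]
  rw [hpre, MeasureTheory.Measure.addHaar_preimage_linearMap, LinearMap.det_toLin', hdet, inv_inv,
    abs_of_pos (by positivity), mul_assoc, mul_comm (orthVol d),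
    ENNReal.ofReal_mul (p := (∏ j, s j) * r ^ d) (by positivity), orthVol,
    ENNReal.ofReal_toReal (volume_orth_one_lt_top d).ne]
  rw [LinearMap.det_toLin', hdet]
  positivity

/-- Minkowski's inequality, in squared form. -/
lemma sum_sq_le_of_le_add {d : ℕ} {x y c : Fin d → ℝ} {r C : ℝ} (hr : 0 ≤ r) (hC : 0 ≤ C)
    (hx : ∀ j, 0 ≤ x j) (hxy : ∀ j, x j ≤ y j + c j)
    (hy : ∑ j, y j ^ 2 ≤ r ^ 2) (hc : ∑ j, c j ^ 2 ≤ C ^ 2) :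
    ∑ j, x j ^ 2 ≤ (r + C) ^ 2 := by
  have h1 : ∑ j, x j ^ 2 ≤ ∑ j, (y j + c j) ^ 2 :=
    Finset.sum_le_sum fun j _ => pow_le_pow_left₀ (hx j) (hxy j) 2
  have h2 : ∑ j, (y j + c j) ^ 2 = ∑ j, y j ^ 2 + 2 * ∑ j, y j * c j + ∑ j, c j ^ 2 := by
    rw [Finset.mul_sum, ← Finset.sum_add_distrib, ← Finset.sum_add_distrib]
    exact Finset.sum_congr rfl fun j _ => by ring
  have h3 : (∑ j, y j * c j) ^ 2 ≤ (r * C) ^ 2 := by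
    refine (Finset.sum_mul_sq_le_sq_mul_sq _ _ _).trans ?_
    rw [mul_pow]
    exact mul_le_mul hy hc (Finset.sum_nonneg fun _ _ => sq_nonneg _) (sq_nonneg _)
  have h4 : ∑ j, y j * c j ≤ r * C := le_of_sq_le_sq h3 (by positivity)
  nlinarith

/-- The half-open unit cell of the lattice whose upper corner is `i`. -/
def cell {d : ℕ} (i : Fin d → ℕ+) : Set (Fin d → ℝ) :=
  Set.univ.pi fun j => Set.Ico (((i j : ℕ) : ℝ) - 1) ((i j : ℕ) : ℝ)

lemma exists_mem_cell {d : ℕ} {x : Fin d → ℝ} (hx : ∀ j, 0 ≤ x j) : ∃ i, x ∈ cell i := by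
  refine ⟨fun j => ⟨⌊x j⌋₊ + 1, Nat.succ_pos _⟩, fun j _ => ?_⟩
  have h1 := Nat.floor_le (hx j)
  have h2 := Nat.lt_floor_add_one (x j)
  constructor <;> simp <;> linarith

lemma cell_disjoint {d : ℕ} {i i' : Fin d → ℕ+} (h : i ≠ i') : Disjoint (cell i) (cell i') := by
  rw [Set.disjoint_left]
  intro x hx hx'
  refine h (funext fun j => ?_)
  have h1 := hx j trivial
  have h2 := hx' j trivial
  have h3 : ((i j : ℕ) : ℝ) < (i' j : ℕ) + 1 := by linarith [h1.1, h2.2]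
  have h4 : ((i' j : ℕ) : ℝ) < (i j : ℕ) + 1 := by linarith [h1.2, h2.1]
  have h5 : (i j : ℕ) < i' j + 1 := by exact_mod_cast h3
  have h6 : (i' j : ℕ) < i j + 1 := by exact_mod_cast h4
  exact PNat.coe_injective (by omega)

lemma volume_biUnion_cell {d : ℕ} (A : Set (Fin d → ℕ+)) :
    MeasureTheory.volume (⋃ i ∈ A, cell i) = (A.encard : ENNReal) := by
  rw [MeasureTheory.measure_biUnion A.to_countable]
  · rw [← ENNReal.tsum_set_one]
    refine tsum_congr fun i => ?_
    rw [cell, Real.volume_pi_Ico]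
    simp
  · intro i _ i' _ h
    exact cell_disjoint h
  · intro i _
    exact MeasurableSet.univ_pi fun j => measurableSet_Ico

/-- The indices whose eigenvalue is at most `t`, with `h` the shift in each coordinate
(`0` for a Dirichlet direction and `1 / 2` for a mixed one). -/
def idx {d : ℕ} (h s : Fin d → ℝ) (t : ℝ) : Set (Fin d → ℕ+) :=
  {i | Real.pi ^ 2 * ∑ j, (((i j : ℕ) : ℝ) - h j) ^ 2 / (s j) ^ 2 ≤ t}

/-- The error in the radius when lattice points are replaced by cells: the Euclidean norm of the
rescaled diagonal of the unit cell. -/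
noncomputable def diagLen {d : ℕ} (s : Fin d → ℝ) : ℝ := √(∑ j, (1 / s j) ^ 2)

lemma diagLen_sq {d : ℕ} (s : Fin d → ℝ) : diagLen s ^ 2 = ∑ j, (1 / s j) ^ 2 :=
  Real.sq_sqrt (Finset.sum_nonneg fun _ _ => sq_nonneg _)

lemma diagLen_nonneg {d : ℕ} (s : Fin d → ℝ) : 0 ≤ diagLen s := Real.sqrt_nonneg _

lemma mem_idx_iff {d : ℕ} {h s : Fin d → ℝ} {r : ℝ} {i : Fin d → ℕ+} :
    i ∈ idx h s (Real.pi ^ 2 * r ^ 2) ↔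
      ∑ j, ((((i j : ℕ) : ℝ) - h j) / s j) ^ 2 ≤ r ^ 2 := by
  simp only [idx, Set.mem_ofPred_eq, div_pow]
  exact mul_le_mul_iff_right₀ (by positivity)

lemma diagLen_pos {d : ℕ} (hd : 1 ≤ d) {s : Fin d → ℝ} (hs : ∀ j, 0 < s j) :
    0 < diagLen s := by
  refine Real.sqrt_pos.2 (Finset.sum_pos (fun j _ => ?_) ⟨⟨0, hd⟩, Finset.mem_univ _⟩)
  have := hs j
  positivity

/-! ### Lattice point bounds -/

/-- Upper lattice point bound, from the cells of the counted points. -/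
lemma encard_idx_le {d : ℕ} (hd : 1 ≤ d) {h s : Fin d → ℝ} (h1 : ∀ j, h j ≤ 1 / 2)
    (hs : ∀ j, 0 < s j) {r : ℝ} (hr : 0 ≤ r) :
    ((idx h s (Real.pi ^ 2 * r ^ 2)).encard : ENNReal) ≤
      ENNReal.ofReal (orthVol d * (∏ j, s j) * (r + diagLen s) ^ d) := by
  have hC := diagLen_pos hd hs
  rw [← volume_biUnion_cell, ← volume_orth hs (by linarith)]
  refine MeasureTheory.measure_mono (Set.iUnion₂_subset fun i hi x hx => ?_)
  rw [mem_idx_iff] at hi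
  have hx0 : ∀ j, 0 ≤ x j := fun j => by
    have a1 := (hx j trivial).1
    have a2 : (1 : ℝ) ≤ (i j : ℕ) := by exact_mod_cast (i j).pos
    linarith
  refine ⟨hx0, sum_sq_le_of_le_add hr hC.le (fun j => div_nonneg (hx0 j) (hs j).le)
    (fun j => ?_) hi (diagLen_sq s).ge⟩
  rw [← add_div]
  refine div_le_div_of_nonneg_right ?_ (hs j).le
  linarith [(hx j trivial).2, h1 j]

/-- Lower lattice point bound: the cells of the counted points cover a slightly smaller
ellipsoid. -/
lemma le_encard_idx {d : ℕ} {h s : Fin d → ℝ} (h0 : ∀ j, 0 ≤ h j) (h1 : ∀ j, h j ≤ 1 / 2)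
    (hs : ∀ j, 0 < s j) {r : ℝ} (hr : diagLen s < r) :
    ENNReal.ofReal (orthVol d * (∏ j, s j) * (r - diagLen s) ^ d) ≤
      ((idx h s (Real.pi ^ 2 * r ^ 2)).encard : ENNReal) := by
  have hC := diagLen_nonneg s
  rw [← volume_biUnion_cell, ← volume_orth hs (by linarith)]
  refine MeasureTheory.measure_mono fun x hx => ?_
  obtain ⟨hx0, hx⟩ := hx
  obtain ⟨i, hi⟩ := exists_mem_cell hx0
  refine Set.mem_iUnion₂.2 ⟨i, ?_, hi⟩
  rw [mem_idx_iff]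
  have key := sum_sq_le_of_le_add (x := fun j => (((i j : ℕ) : ℝ) - h j) / s j)
    (y := fun j => x j / s j) (c := fun j => 1 / s j) (r := r - diagLen s) (C := diagLen s)
    (by linarith) hC ?_ ?_ hx (diagLen_sq s).ge
  · rwa [sub_add_cancel] at key
  · intro j
    have a2 : (1 : ℝ) ≤ (i j : ℕ) := by exact_mod_cast (i j).pos
    exact div_nonneg (by linarith [h1 j]) (hs j).le
  · intro j
    rw [← add_div]
    refine div_le_div_of_nonneg_right ?_ (hs j).le
    linarith [(hi j trivial).1, h0 j]

lemma idx_finite {d : ℕ} (hd : 1 ≤ d) {h s : Fin d → ℝ} (h1 : ∀ j, h j ≤ 1 / 2)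
    (hs : ∀ j, 0 < s j) (t : ℝ) : (idx h s t).Finite := by
  -- enlarge `t` to a number of the form `π² r²` with `r ≥ 0`
  have hsub : idx h s t ⊆ idx h s (Real.pi ^ 2 * (√(|t|) / Real.pi) ^ 2) := by
    intro i hi
    have hpi := Real.pi_pos
    refine le_trans (show _ ≤ t from hi) ((le_abs_self t).trans (le_of_eq ?_))
    rw [div_pow, Real.sq_sqrt (abs_nonneg t)]
    field_simp
  refine Set.Finite.subset ?_ hsub
  have := encard_idx_le hd h1 hs (r := √(|t|) / Real.pi) (by positivity)
  have h2 := lt_of_le_of_lt this ENNReal.ofReal_lt_top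
  rw [← Set.encard_lt_top_iff]
  exact_mod_cast h2

/-! ### Eigenvalues and Weyl bounds -/

/-- The `k`-th eigenvalue for a general shift vector. -/
noncomputable def shiftEig {d : ℕ} (h s : Fin d → ℝ) (k : ℕ) : ℝ :=
  sInf {t : ℝ | (k : ℕ∞) ≤ (idx h s t).encard}

/-- Every counted index has all its terms at least `1 / (4 s j ^ 2)`; this is where the absence of
Neumann directions is used. -/
lemma diagLen_le_of_mem {d : ℕ} {h s : Fin d → ℝ} (h1 : ∀ j, h j ≤ 1 / 2)
    {t : ℝ} {i : Fin d → ℕ+} (hi : i ∈ idx h s t) :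
    Real.pi ^ 2 * (diagLen s ^ 2 / 4) ≤ t := by
  refine le_trans (mul_le_mul_of_nonneg_left ?_ (sq_nonneg _)) (show _ ≤ t from hi)
  rw [diagLen_sq, Finset.sum_div]
  refine Finset.sum_le_sum fun j _ => ?_
  have a2 : (1 : ℝ) ≤ (i j : ℕ) := by exact_mod_cast (i j).pos
  have a3 : 1 / 4 ≤ (((i j : ℕ) : ℝ) - h j) ^ 2 := by nlinarith [h1 j]
  calc (1 / s j) ^ 2 / 4 = (1 / 4) / s j ^ 2 := by ring
    _ ≤ _ := div_le_div_of_nonneg_right a3 (sq_nonneg _)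

lemma idx_nonempty_of_le {d : ℕ} {h s : Fin d → ℝ} {k : ℕ} (hk : 1 ≤ k) {t : ℝ}
    (ht : (k : ℕ∞) ≤ (idx h s t).encard) : (idx h s t).Nonempty := by
  rw [← Set.one_le_encard_iff_nonempty]
  refine le_trans ?_ ht
  exact_mod_cast hk

lemma diagLen_le_of_le_encard {d : ℕ} {h s : Fin d → ℝ} (h1 : ∀ j, h j ≤ 1 / 2) {k : ℕ}
    (hk : 1 ≤ k) {t : ℝ} (ht : (k : ℕ∞) ≤ (idx h s t).encard) :
    Real.pi ^ 2 * (diagLen s ^ 2 / 4) ≤ t := by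
  obtain ⟨i, hi⟩ := idx_nonempty_of_le hk ht
  exact diagLen_le_of_mem h1 hi

lemma shiftEig_le {d : ℕ} {h s : Fin d → ℝ} (h1 : ∀ j, h j ≤ 1 / 2) {k : ℕ}
    (hk : 1 ≤ k) {t : ℝ} (ht : (k : ℕ∞) ≤ (idx h s t).encard) : shiftEig h s k ≤ t :=
  csInf_le ⟨_, fun _ ht' => diagLen_le_of_le_encard h1 hk ht'⟩ ht

/-- The radius at which the lower lattice point bound guarantees `k` points. -/
lemma le_encard_of_radius {d : ℕ} {h s : Fin d → ℝ} (h0 : ∀ j, 0 ≤ h j)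
    (h1 : ∀ j, h j ≤ 1 / 2) (hs : ∀ j, 0 < s j) {k : ℕ} {r : ℝ} (hr : diagLen s < r)
    (hk : (k : ℝ) ≤ orthVol d * (∏ j, s j) * (r - diagLen s) ^ d) :
    (k : ℕ∞) ≤ (idx h s (Real.pi ^ 2 * r ^ 2)).encard := by
  have h2 := (ENNReal.ofReal_le_ofReal hk).trans (le_encard_idx h0 h1 hs hr)
  rw [ENNReal.ofReal_natCast] at h2
  exact_mod_cast h2

/-- The infimum defining the eigenvalue is attained: the counting function is right-continuous. -/
lemma shiftEig_spec {d : ℕ} (hd : 1 ≤ d) {h s : Fin d → ℝ} (h0 : ∀ j, 0 ≤ h j)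
    (h1 : ∀ j, h j ≤ 1 / 2) (hs : ∀ j, 0 < s j) {k : ℕ} (hk : 1 ≤ k) :
    (k : ℕ∞) ≤ (idx h s (shiftEig h s k)).encard := by
  have hV : 0 < orthVol d * ∏ j, s j :=
    mul_pos (orthVol_pos hd) (Finset.prod_pos fun j _ => hs j)
  have hne : {t : ℝ | (k : ℕ∞) ≤ (idx h s t).encard}.Nonempty := by
    have hk' : (1 : ℝ) ≤ k := by exact_mod_cast hk
    -- a radius exceeding `diagLen s` by at least `max 1 (k / volume)`
    refine ⟨_, le_encard_of_radius h0 h1 hs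
      (r := diagLen s + (1 + k / (orthVol d * ∏ j, s j))) ?_ ?_⟩
    · have : 0 ≤ k / (orthVol d * ∏ j, s j) := by positivity
      linarith
    · have h2 : 0 ≤ k / (orthVol d * ∏ j, s j) := by positivity
      rw [add_sub_cancel_left]
      have h3 : 1 + k / (orthVol d * ∏ j, s j) ≤ (1 + k / (orthVol d * ∏ j, s j)) ^ d :=
        le_self_pow₀ (by linarith) (by omega)
      calc (k : ℝ) = (orthVol d * ∏ j, s j) * (k / (orthVol d * ∏ j, s j)) := by
            rw [mul_comm, div_mul_cancel₀ _ hV.ne']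
        _ ≤ _ := mul_le_mul_of_nonneg_left (by linarith) hV.le
  have hglb : IsGLB {t : ℝ | (k : ℕ∞) ≤ (idx h s t).encard} (shiftEig h s k) :=
    isGLB_csInf hne ⟨_, fun _ ht' => diagLen_le_of_le_encard h1 hk ht'⟩
  have hfreq := hglb.frequently_mem hne
  -- near the infimum no new eigenvalue appears
  have hev : ∀ᶠ t in nhds (shiftEig h s k), ∀ i ∈ idx h s (shiftEig h s k + 1),
      i ∉ idx h s (shiftEig h s k) → i ∉ idx h s t := by
    rw [Filter.eventually_all_finite (idx_finite hd h1 hs _)]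
    intro i _
    by_cases hi : i ∈ idx h s (shiftEig h s k)
    · exact Filter.Eventually.of_forall fun t h => absurd hi h
    · have hlt : shiftEig h s k <
          Real.pi ^ 2 * ∑ j, (((i j : ℕ) : ℝ) - h j) ^ 2 / (s j) ^ 2 := not_le.1 hi
      filter_upwards [eventually_lt_nhds hlt] with t ht _
      exact not_le.2 ht
  have hev2 : ∀ᶠ t in nhds (shiftEig h s k), t < shiftEig h s k + 1 :=
    eventually_lt_nhds (by linarith)
  obtain ⟨t, ht, ht1, ht2⟩ :=
    (hfreq.and_eventually ((hev.and hev2).filter_mono nhdsWithin_le_nhds)).exists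
  refine le_trans ht (Set.encard_le_encard fun i hi => ?_)
  by_contra hcon
  exact ht1 i (le_trans (show _ ≤ t from hi) ht2.le) hcon hi

/-- The eigenvalue radius `ρ`, defined by `ζ = π² ρ²`. -/
noncomputable def eigRad {d : ℕ} (h s : Fin d → ℝ) (k : ℕ) : ℝ := √(shiftEig h s k) / Real.pi

section Radius

variable {d : ℕ} {h s : Fin d → ℝ} {k : ℕ}

lemma shiftEig_lower (hd : 1 ≤ d) (h0 : ∀ j, 0 ≤ h j) (h1 : ∀ j, h j ≤ 1 / 2)
    (hs : ∀ j, 0 < s j) (hk : 1 ≤ k) :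
    Real.pi ^ 2 * (diagLen s ^ 2 / 4) ≤ shiftEig h s k :=
  diagLen_le_of_le_encard h1 hk (shiftEig_spec hd h0 h1 hs hk)

lemma shiftEig_pos (hd : 1 ≤ d) (h0 : ∀ j, 0 ≤ h j) (h1 : ∀ j, h j ≤ 1 / 2)
    (hs : ∀ j, 0 < s j) (hk : 1 ≤ k) : 0 < shiftEig h s k := by
  have := diagLen_pos hd hs
  have hpi := Real.pi_pos
  exact lt_of_lt_of_le (by positivity) (shiftEig_lower hd h0 h1 hs hk)

lemma shiftEig_eq (hd : 1 ≤ d) (h0 : ∀ j, 0 ≤ h j) (h1 : ∀ j, h j ≤ 1 / 2)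
    (hs : ∀ j, 0 < s j) (hk : 1 ≤ k) :
    shiftEig h s k = Real.pi ^ 2 * eigRad h s k ^ 2 := by
  rw [eigRad, div_pow, Real.sq_sqrt (shiftEig_pos hd h0 h1 hs hk).le]
  have := Real.pi_pos.ne'
  field_simp

lemma eigRad_nonneg : 0 ≤ eigRad h s k := div_nonneg (Real.sqrt_nonneg _) Real.pi_pos.le

lemma diagLen_le_eigRad (hd : 1 ≤ d) (h0 : ∀ j, 0 ≤ h j) (h1 : ∀ j, h j ≤ 1 / 2)
    (hs : ∀ j, 0 < s j) (hk : 1 ≤ k) : diagLen s ≤ 2 * eigRad h s k := by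
  have h2 := shiftEig_lower hd h0 h1 hs hk
  rw [shiftEig_eq hd h0 h1 hs hk, mul_le_mul_iff_right₀ (by positivity)] at h2
  refine le_of_sq_le_sq ?_ (by linarith [eigRad_nonneg (h := h) (s := s) (k := k)])
  linarith

/-- Weyl-type lower bound on the eigenvalue radius. -/
lemma le_eigRad (hd : 1 ≤ d) (h0 : ∀ j, 0 ≤ h j) (h1 : ∀ j, h j ≤ 1 / 2)
    (hs : ∀ j, 0 < s j) (hk : 1 ≤ k) :
    (k : ℝ) ≤ orthVol d * (∏ j, s j) * (eigRad h s k + diagLen s) ^ d := by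
  have h2 := shiftEig_spec hd h0 h1 hs hk
  rw [shiftEig_eq hd h0 h1 hs hk] at h2
  have h3 := encard_idx_le hd h1 hs (eigRad_nonneg (h := h) (s := s) (k := k))
  have h4 : (k : ENNReal) ≤ ((idx h s (Real.pi ^ 2 * eigRad h s k ^ 2)).encard : ENNReal) := by
    exact_mod_cast h2
  have h5 := h4.trans h3
  rw [← ENNReal.ofReal_natCast] at h5
  refine (ENNReal.ofReal_le_ofReal_iff ?_).1 h5
  have a1 := (orthVol_pos hd).le
  have a2 : 0 ≤ ∏ j, s j := Finset.prod_nonneg fun j _ => (hs j).le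
  have a3 := diagLen_nonneg s
  have a4 := eigRad_nonneg (h := h) (s := s) (k := k)
  positivity

/-- Weyl-type upper bound on the eigenvalue radius. -/
lemma eigRad_le (hd : 1 ≤ d) (h0 : ∀ j, 0 ≤ h j) (h1 : ∀ j, h j ≤ 1 / 2)
    (hs : ∀ j, 0 < s j) (hk : 1 ≤ k) (hr : diagLen s ≤ eigRad h s k) :
    orthVol d * (∏ j, s j) * (eigRad h s k - diagLen s) ^ d ≤ k := by
  have hV : 0 < orthVol d * ∏ j, s j :=
    mul_pos (orthVol_pos hd) (Finset.prod_pos fun j _ => hs j)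
  have hk' : (0 : ℝ) < k := by exact_mod_cast hk
  -- `u` is the excess radius at which the lower lattice bound equals `k`
  set u : ℝ := (k / (orthVol d * ∏ j, s j)) ^ ((d : ℝ)⁻¹) with hu
  have hu0 : 0 < u := by positivity
  have hud : u ^ d = k / (orthVol d * ∏ j, s j) :=
    Real.rpow_inv_natCast_pow (by positivity) (by omega)
  have hmul : orthVol d * (∏ j, s j) * u ^ d = k := by
    rw [hud, mul_comm, div_mul_cancel₀ _ hV.ne']
  have h2 := shiftEig_le h1 hk (le_encard_of_radius h0 h1 hs (k := k)
    (r := diagLen s + u) (by linarith) (by rw [add_sub_cancel_left, hmul]))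
  rw [shiftEig_eq hd h0 h1 hs hk, mul_le_mul_iff_right₀ (by positivity)] at h2
  have h3 : eigRad h s k ≤ diagLen s + u :=
    le_of_sq_le_sq h2 (by linarith [diagLen_nonneg s])
  calc _ ≤ orthVol d * (∏ j, s j) * u ^ d := by
        refine mul_le_mul_of_nonneg_left ?_ hV.le
        exact pow_le_pow_left₀ (by linarith) (by linarith) d
    _ = k := hmul

end Radius

/-- Monotonicity and scaling in the side lengths, in one inequality. -/
lemma shiftEig_le_mul {d : ℕ} (hd : 1 ≤ d) {h s s' : Fin d → ℝ} (h0 : ∀ j, 0 ≤ h j)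
    (h1 : ∀ j, h j ≤ 1 / 2) (hs : ∀ j, 0 < s j) (hs' : ∀ j, 0 < s' j) {m : ℝ}
    (hss : ∀ j, s' j ≤ m * s j) {k : ℕ} (hk : 1 ≤ k) :
    shiftEig h s k ≤ m ^ 2 * shiftEig h s' k := by
  refine shiftEig_le h1 hk ((shiftEig_spec hd h0 h1 hs' hk).trans
    (Set.encard_le_encard fun i hi => ?_))
  refine le_trans ?_ (mul_le_mul_of_nonneg_left (show _ ≤ shiftEig h s' k from hi) (sq_nonneg m))
  rw [mul_left_comm]
  refine mul_le_mul_of_nonneg_left ?_ (sq_nonneg _)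
  rw [Finset.mul_sum]
  refine Finset.sum_le_sum fun j _ => ?_
  have a1 := hs j
  have a2 := hs' j
  have a3 : s' j ^ 2 ≤ (m * s j) ^ 2 := pow_le_pow_left₀ a2.le (hss j) 2
  rw [mul_div_assoc', div_le_div_iff₀ (by positivity) (by positivity)]
  calc _ ≤ (((i j : ℕ) : ℝ) - h j) ^ 2 * (m * s j) ^ 2 :=
        mul_le_mul_of_nonneg_left a3 (sq_nonneg _)
    _ = _ := by ring

/-- The eigenvalues blow up when some side tends to zero. -/
lemma side_lower {d : ℕ} (hd : 1 ≤ d) {h s : Fin d → ℝ} (h0 : ∀ j, 0 ≤ h j)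
    (h1 : ∀ j, h j ≤ 1 / 2) (hs : ∀ j, 0 < s j) {k : ℕ} (hk : 1 ≤ k) {L : ℝ}
    (hL : shiftEig h s k ≤ L) (j : Fin d) : 1 ≤ L * s j ^ 2 := by
  have h2 := (shiftEig_lower hd h0 h1 hs hk).trans hL
  have h3 : (1 / s j) ^ 2 ≤ diagLen s ^ 2 := by
    rw [diagLen_sq]
    exact Finset.single_le_sum (f := fun j => (1 / s j) ^ 2) (fun _ _ => sq_nonneg _)
      (Finset.mem_univ j)
  have hpi := Real.pi_gt_three
  have h5 : 0 < (1 / s j) ^ 2 := by have := hs j; positivity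
  have h4 : (1 / s j) ^ 2 ≤ L := by
    have hpi4 : 4 ≤ Real.pi ^ 2 := by nlinarith
    nlinarith [mul_le_mul_of_nonneg_right hpi4 (sq_nonneg (diagLen s))]
  have h6 : 0 < s j ^ 2 := by have := hs j; positivity
  rw [one_div, inv_pow, inv_le_iff_one_le_mul₀ h6] at h4
  exact h4

/-! ### Unit perimeter and existence of minimisers -/

lemma prod_erase_le_half {d : ℕ} {s : Fin d → ℝ} (hs : ∀ j, 0 < s j)
    (hP : cuboidPerimeter d s = 1) (j : Fin d) : ∏ i ∈ Finset.univ.erase j, s i ≤ 1 / 2 := by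
  have := Finset.single_le_sum (f := fun j => ∏ i ∈ Finset.univ.erase j, s i)
    (fun j _ => Finset.prod_nonneg fun i _ => (hs i).le) (Finset.mem_univ j)
  rw [cuboidPerimeter] at hP
  linarith

/-- With at least three dimensions, a lower bound on all sides and unit perimeter bound every
side from above. -/
lemma side_upper {d : ℕ} (hd : 3 ≤ d) {s : Fin d → ℝ} {δ : ℝ} (hδ : 0 < δ)
    (hs : ∀ j, δ ≤ s j) (hP : cuboidPerimeter d s = 1) (j : Fin d) :
    s j ≤ 1 / δ ^ (d - 2) := by
  obtain ⟨i, hi⟩ : ∃ i : Fin d, i ≠ j :=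
    haveI : Nontrivial (Fin d) := Fin.nontrivial_iff_two_le.2 (by omega)
    exists_ne j
  have h2 := prod_erase_le_half (fun j => hδ.trans_le (hs j)) hP i
  have hj : j ∈ Finset.univ.erase i := Finset.mem_erase.2 ⟨hi.symm, Finset.mem_univ _⟩
  rw [← Finset.mul_prod_erase _ _ hj] at h2
  have h3 : δ ^ (d - 2) ≤ ∏ l ∈ (Finset.univ.erase i).erase j, s l := by
    have hc : ((Finset.univ.erase i).erase j).card = d - 2 := by
      rw [Finset.card_erase_of_mem hj, Finset.card_erase_of_mem (Finset.mem_univ _)]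
      simp only [Finset.card_univ, Fintype.card_fin]
      omega
    rw [← hc, ← Finset.prod_const]
    exact Finset.prod_le_prod (fun _ _ => hδ.le) fun l _ => hs l
  rw [le_div_iff₀ (by positivity)]
  have := mul_le_mul_of_nonneg_left h3 (hδ.trans_le (hs j)).le
  linarith

lemma continuous_cuboidPerimeter (d : ℕ) : Continuous (cuboidPerimeter d) := by
  unfold cuboidPerimeter
  fun_prop

/-- The side of the cube of unit perimeter. -/
noncomputable def cubeSide (d : ℕ) : ℝ := (2 * (d : ℝ)) ^ (-(1 : ℝ) / ((d : ℝ) - 1))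

lemma cubeSide_pos {d : ℕ} (hd : 1 ≤ d) : 0 < cubeSide d := by
  have : (0 : ℝ) < d := by exact_mod_cast hd
  exact Real.rpow_pos_of_pos (by positivity) _

lemma log_cubeSide {d : ℕ} (hd : 2 ≤ d) :
    ((d : ℝ) - 1) * Real.log (cubeSide d) = -Real.log (2 * d) := by
  have : (2 : ℝ) ≤ d := by exact_mod_cast hd
  have h1 : (d : ℝ) - 1 ≠ 0 := by linarith
  rw [cubeSide, Real.log_rpow (by linarith)]
  field_simp

lemma cuboidPerimeter_cube {d : ℕ} (hd : 2 ≤ d) :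
    cuboidPerimeter d (fun _ => cubeSide d) = 1 := by
  have hd' : (2 : ℝ) ≤ d := by exact_mod_cast hd
  have h1 : (d : ℝ) - 1 ≠ 0 := by linarith
  have h2 : cubeSide d ^ (d - 1) = (2 * (d : ℝ))⁻¹ := by
    rw [cubeSide, ← Real.rpow_natCast, ← Real.rpow_mul (by linarith), Nat.cast_sub (by omega),
      Nat.cast_one, div_mul_cancel₀ _ h1, Real.rpow_neg_one]
  simp only [cuboidPerimeter, Finset.prod_const, Finset.card_erase_of_mem (Finset.mem_univ _),
    Finset.card_univ, Fintype.card_fin, Finset.sum_const, nsmul_eq_mul, h2]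
  field_simp

/-- Minimisers exist: the competitors at least as good as the cube lie in a compact set, on which
the eigenvalue is lower semicontinuous. -/
lemma exists_min {d : ℕ} (hd : 3 ≤ d) {h : Fin d → ℝ} (h0 : ∀ j, 0 ≤ h j)
    (h1 : ∀ j, h j ≤ 1 / 2) {k : ℕ} (hk : 1 ≤ k) :
    ∃ s : Fin d → ℝ, (∀ j, 0 < s j) ∧ cuboidPerimeter d s = 1 ∧
      ∀ s' : Fin d → ℝ, (∀ j, 0 < s' j) → cuboidPerimeter d s' = 1 →
        shiftEig h s k ≤ shiftEig h s' k := by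
  have hd1 : 1 ≤ d := by omega
  have hq : ∀ _ : Fin d, 0 < cubeSide d := fun _ => cubeSide_pos hd1
  set L := shiftEig h (fun _ => cubeSide d) k with hL
  have hL0 : 0 < L := shiftEig_pos hd1 h0 h1 hq hk
  set δ : ℝ := 1 / √L with hδ
  have hδ0 : 0 < δ := by positivity
  -- all competitors at least as good as the cube have sides at least `δ`
  have hlow : ∀ s : Fin d → ℝ, (∀ j, 0 < s j) → shiftEig h s k ≤ L → ∀ j, δ ≤ s j := by
    intro s hs hsL j
    have h2 := side_lower hd1 h0 h1 hs hk hsL j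
    rw [hδ, div_le_iff₀ (by positivity)]
    refine le_of_sq_le_sq ?_ (mul_nonneg (hs j).le (Real.sqrt_nonneg _))
    rw [mul_pow, Real.sq_sqrt hL0.le]
    linarith
  set K : Set (Fin d → ℝ) := {s | ∀ j, δ ≤ s j} ∩ {s | cuboidPerimeter d s = 1} with hK
  have hKc : IsCompact K := by
    refine (isCompact_Icc (a := fun _ : Fin d => δ)
      (b := fun _ : Fin d => 1 / δ ^ (d - 2))).of_isClosed_subset ?_ ?_
    · refine IsClosed.inter ?_ (isClosed_eq (continuous_cuboidPerimeter d) continuous_const)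
      have : {s : Fin d → ℝ | ∀ j, δ ≤ s j} = ⋂ j, {s | δ ≤ s j} := by
        ext s; simp
      rw [this]
      exact isClosed_iInter fun j => isClosed_le continuous_const (continuous_apply j)
    · exact fun s hs => ⟨hs.1, fun j => side_upper hd hδ0 hs.1 hs.2 j⟩
  have hKne : K.Nonempty := ⟨_, hlow _ hq le_rfl, cuboidPerimeter_cube (by omega)⟩
  have hlsc : LowerSemicontinuousOn (fun s => shiftEig h s k) K := by
    intro s hs y hy
    have hspos : ∀ j, 0 < s j := fun j => hδ0.trans_le (hs.1 j)
    -- some dilation factor `m > 1` still satisfies `m² y < ζ(s)`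
    obtain ⟨m, hm1, hmy⟩ : ∃ m : ℝ, 1 < m ∧ m ^ 2 * y < shiftEig h s k := by
      have hc : Filter.Tendsto (fun m : ℝ => m ^ 2 * y) (nhdsWithin 1 (Set.Ioi 1))
          (nhds (1 ^ 2 * y)) :=
        ((continuous_pow 2).mul continuous_const).continuousAt.tendsto.mono_left
          nhdsWithin_le_nhds
      have hev := hc.eventually (eventually_lt_nhds (b := shiftEig h s k) (by simpa using hy))
      obtain ⟨m, h2, h3⟩ := (hev.and self_mem_nhdsWithin).exists
      exact ⟨m, h3, h2⟩
    have hnear : ∀ᶠ s' in nhdsWithin s K, ∀ j, s' j ≤ m * s j := by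
      refine Filter.Eventually.filter_mono nhdsWithin_le_nhds ?_
      rw [Filter.eventually_all]
      intro j
      have hlt : s j < m * s j := by nlinarith [hspos j]
      filter_upwards [(continuous_apply j).continuousAt.eventually (eventually_lt_nhds hlt)]
        with s' hs'
      exact hs'.le
    filter_upwards [hnear, self_mem_nhdsWithin] with s' hs' hs'K
    have h2 := shiftEig_le_mul hd1 h0 h1 hspos (fun j => hδ0.trans_le (hs'K.1 j)) hs' hk
    have h3 : m ^ 2 * y < m ^ 2 * shiftEig h s' k := lt_of_lt_of_le hmy h2
    exact lt_of_mul_lt_mul_left h3 (sq_nonneg m)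
  obtain ⟨s, hsK, hmin⟩ := hlsc.exists_isMinOn hKne hKc
  have hmin' : ∀ s' ∈ K, shiftEig h s k ≤ shiftEig h s' k := fun s' hs' => hmin hs'
  refine ⟨s, fun j => hδ0.trans_le (hsK.1 j), hsK.2, fun s' hs' hP' => ?_⟩
  by_cases hc : shiftEig h s' k ≤ L
  · exact hmin' s' ⟨hlow s' hs' hc, hP'⟩
  · refine (hmin' _ ⟨hlow _ hq le_rfl, cuboidPerimeter_cube (by omega)⟩).trans ?_
    exact (not_le.1 hc).le

/-! ### Stability of the isoperimetric inequality -/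

/-- Quantitative isoperimetric inequality for cuboids: the deviations of the normalised face
areas from `1` are controlled by the volume deficit relative to the cube. It is the termwise bound
`(√v - 1) ^ 2 ≤ v - 1 - log v` summed over faces. -/
lemma isoperimetric {d : ℕ} (hd : 2 ≤ d) {s : Fin d → ℝ} (hs : ∀ j, 0 < s j)
    (hP : cuboidPerimeter d s = 1) :
    ∑ j, (√(2 * d * (∏ i, s i) / s j) - 1) ^ 2 ≤
      -(((d : ℝ) - 1) * Real.log ((∏ i, s i) / cubeSide d ^ d)) := by
  have hV : 0 < ∏ i, s i := Finset.prod_pos fun j _ => hs j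
  have hd0 : (0 : ℝ) < d := by exact_mod_cast (by omega : 0 < d)
  have hq := cubeSide_pos (d := d) (by omega)
  set V := ∏ i, s i with hVdef
  have hv : ∀ j, 0 < 2 * d * V / s j := fun j => div_pos (by positivity) (hs j)
  have hterm : ∀ j, (√(2 * d * V / s j) - 1) ^ 2 ≤
      2 * d * V / s j - 1 - Real.log (2 * d * V / s j) := by
    intro j
    have a1 := Real.log_le_sub_one_of_pos (Real.sqrt_pos.2 (hv j))
    rw [Real.log_sqrt (hv j).le] at a1
    have a2 := Real.sq_sqrt (hv j).le
    nlinarith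
  have hsum : ∑ j, 2 * d * V / s j = d := by
    have : ∀ j, 2 * d * V / s j = 2 * d * ∏ i ∈ Finset.univ.erase j, s i := by
      intro j
      rw [hVdef, ← Finset.mul_prod_erase _ _ (Finset.mem_univ j)]
      have := (hs j).ne'
      field_simp
    rw [Finset.sum_congr rfl fun j _ => this j, ← Finset.mul_sum]
    rw [cuboidPerimeter] at hP
    linear_combination (d : ℝ) * hP
  have hlogV : ∑ j, Real.log (s j) = Real.log V :=
    (Real.log_prod fun j _ => (hs j).ne').symm
  have hlog : ∑ j, Real.log (2 * d * V / s j) = ((d : ℝ) - 1) * Real.log (V / cubeSide d ^ d) := by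
    have : ∀ j, Real.log (2 * d * V / s j) = Real.log (2 * d) + Real.log V - Real.log (s j) := by
      intro j
      rw [Real.log_div (by positivity) (hs j).ne', Real.log_mul (by positivity) hV.ne']
    rw [Finset.sum_congr rfl fun j _ => this j, Finset.sum_sub_distrib, hlogV,
      Real.log_div hV.ne' (by positivity), Real.log_pow]
    simp only [Finset.sum_const, Finset.card_univ, Fintype.card_fin, nsmul_eq_mul]
    linear_combination (d : ℝ) * log_cubeSide hd
  calc _ ≤ ∑ j, (2 * d * V / s j - 1 - Real.log (2 * d * V / s j)) :=
        Finset.sum_le_sum fun j _ => hterm j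
    _ = _ := by
        rw [Finset.sum_sub_distrib, Finset.sum_sub_distrib, hsum, hlog]
        simp

lemma volume_le_cube {d : ℕ} (hd : 2 ≤ d) {s : Fin d → ℝ} (hs : ∀ j, 0 < s j)
    (hP : cuboidPerimeter d s = 1) : (∏ i, s i) / cubeSide d ^ d ≤ 1 := by
  have h2 := (Finset.sum_nonneg fun j _ => sq_nonneg _).trans (isoperimetric hd hs hP)
  have hd' : (2 : ℝ) ≤ d := by exact_mod_cast hd
  have hq := cubeSide_pos (d := d) (by omega)
  have hV : 0 < ∏ i, s i := Finset.prod_pos fun j _ => hs j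
  have h3 : Real.log ((∏ i, s i) / cubeSide d ^ d) ≤ 0 := by nlinarith
  exact (Real.log_nonpos_iff (by positivity)).1 h3

/-- Stability: unit-perimeter cuboids whose volumes tend to that of the cube converge to the
cube. -/
lemma tendsto_side_of_tendsto_volume {d : ℕ} (hd : 2 ≤ d) {S : ℕ → Fin d → ℝ}
    (hS : ∀ k, 1 ≤ k → ∀ j, 0 < S k j) (hP : ∀ k, 1 ≤ k → cuboidPerimeter d (S k) = 1)
    (hV : Filter.Tendsto (fun k => (∏ i, S k i) / cubeSide d ^ d) Filter.atTop (nhds 1))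
    (j : Fin d) : Filter.Tendsto (fun k => S k j) Filter.atTop (nhds (cubeSide d)) := by
  have hq := cubeSide_pos (d := d) (by omega)
  have hd0 : (0 : ℝ) < d := by exact_mod_cast (by omega : 0 < d)
  have hlog : Filter.Tendsto
      (fun k => -(((d : ℝ) - 1) * Real.log ((∏ i, S k i) / cubeSide d ^ d)))
      Filter.atTop (nhds 0) := by
    have := ((hV.log one_ne_zero).const_mul ((d : ℝ) - 1)).neg
    simpa using this
  have hsq : Filter.Tendsto (fun k => (√(2 * d * (∏ i, S k i) / S k j) - 1) ^ 2)
      Filter.atTop (nhds 0) := by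
    refine tendsto_of_tendsto_of_tendsto_of_le_of_le' tendsto_const_nhds hlog
      (Filter.Eventually.of_forall fun k => sq_nonneg _) ?_
    filter_upwards [Filter.eventually_ge_atTop 1] with k hk
    refine le_trans ?_ (isoperimetric hd (hS k hk) (hP k hk))
    exact Finset.single_le_sum
      (f := fun j => (√(2 * d * (∏ i, S k i) / S k j) - 1) ^ 2) (fun _ _ => sq_nonneg _)
      (Finset.mem_univ j)
  have habs : Filter.Tendsto (fun k => √(2 * d * (∏ i, S k i) / S k j) - 1)
      Filter.atTop (nhds 0) := by
    have := hsq.sqrt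
    simp only [Real.sqrt_sq_eq_abs, Real.sqrt_zero] at this
    exact (tendsto_zero_iff_abs_tendsto_zero _).2 this
  have hone : Filter.Tendsto (fun k => √(2 * d * (∏ i, S k i) / S k j) ^ 2)
      Filter.atTop (nhds 1) := by
    have := (habs.add_const 1).pow 2
    simpa using this
  have hlim := ((hV.const_mul (2 * d * cubeSide d ^ d)).div hone one_ne_zero)
  have hval : 2 * d * cubeSide d ^ d * 1 / 1 = cubeSide d := by
    have h2 := cuboidPerimeter_cube hd
    simp only [cuboidPerimeter, Finset.prod_const, Finset.card_erase_of_mem (Finset.mem_univ _),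
      Finset.card_univ, Fintype.card_fin, Finset.sum_const, nsmul_eq_mul] at h2
    have h3 : cubeSide d ^ d = cubeSide d ^ (d - 1) * cubeSide d := by
      rw [← pow_succ]; congr 1; omega
    rw [h3]
    linear_combination cubeSide d * h2
  rw [hval] at hlim
  refine hlim.congr' ?_
  filter_upwards [Filter.eventually_ge_atTop 1] with k hk
  have hsj := hS k hk j
  have hVk : 0 < ∏ i, S k i := Finset.prod_pos fun j _ => hS k hk j
  simp only [Pi.div_apply]
  rw [Real.sq_sqrt (by positivity)]
  field_simp

/-- If a unit-perimeter cuboid has volume at least `v`, its sides are at least `2 v`. -/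
lemma side_ge_of_volume {d : ℕ} {s : Fin d → ℝ} (hs : ∀ j, 0 < s j)
    (hP : cuboidPerimeter d s = 1) {v : ℝ} (hv : v ≤ ∏ i, s i) (j : Fin d) : 2 * v ≤ s j := by
  have h2 := prod_erase_le_half hs hP j
  rw [← Finset.mul_prod_erase _ _ (Finset.mem_univ j)] at hv
  nlinarith [hs j]

/-! ### Convergence of minimisers -/

/-- Minimality and the two-sided Weyl bounds compare the volume of a minimiser with that of the
cube. -/
lemma volume_compare {d : ℕ} (hd : 1 ≤ d) {h s s' : Fin d → ℝ} (h0 : ∀ j, 0 ≤ h j)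
    (h1 : ∀ j, h j ≤ 1 / 2) (hs : ∀ j, 0 < s j) (hs' : ∀ j, 0 < s' j) {k : ℕ} (hk : 1 ≤ k)
    (hle : eigRad h s k ≤ eigRad h s' k) (hr : diagLen s' ≤ eigRad h s' k) {C : ℝ}
    (hC : diagLen s ≤ C) :
    ((eigRad h s' k - diagLen s') / (eigRad h s' k + C)) ^ d ≤ (∏ j, s j) / ∏ j, s' j := by
  have e1 := (eigRad_le hd h0 h1 hs' hk hr).trans (le_eigRad hd h0 h1 hs hk)
  have hV : 0 < ∏ j, s j := Finset.prod_pos fun j _ => hs j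
  have hV' : 0 < ∏ j, s' j := Finset.prod_pos fun j _ => hs' j
  have a1 := diagLen_pos hd hs
  have a2 := eigRad_nonneg (h := h) (s := s) (k := k)
  have a3 := orthVol_pos hd
  have e2 : (eigRad h s k + diagLen s) ^ d ≤ (eigRad h s' k + C) ^ d :=
    pow_le_pow_left₀ (by linarith) (by linarith) d
  have e3 := e1.trans (mul_le_mul_of_nonneg_left e2 (by positivity))
  rw [mul_assoc, mul_assoc, mul_le_mul_iff_right₀ a3] at e3
  have a4 : 0 < eigRad h s' k + C := by linarith
  rw [div_pow, div_le_div_iff₀ (by positivity) hV']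
  linarith

lemma eigRad_tendsto {d : ℕ} (hd : 1 ≤ d) {h s : Fin d → ℝ} (h0 : ∀ j, 0 ≤ h j)
    (h1 : ∀ j, h j ≤ 1 / 2) (hs : ∀ j, 0 < s j) :
    Filter.Tendsto (fun k => eigRad h s k) Filter.atTop Filter.atTop := by
  rw [Filter.tendsto_atTop]
  intro b
  -- if the radius stayed below `b`, the Weyl bound would bound `k`
  filter_upwards [Filter.eventually_ge_atTop 1, (tendsto_natCast_atTop_atTop (R := ℝ)).eventually
    (Filter.eventually_gt_atTop (orthVol d * (∏ j, s j) * (b + diagLen s) ^ d))] with k hk hkb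
  by_contra! hcon
  have hV : 0 < ∏ j, s j := Finset.prod_pos fun j _ => hs j
  have a3 := orthVol_pos hd
  have a1 := diagLen_nonneg s
  have a2 := eigRad_nonneg (h := h) (s := s) (k := k)
  have e2 : (eigRad h s k + diagLen s) ^ d ≤ (b + diagLen s) ^ d :=
    pow_le_pow_left₀ (by linarith) (by linarith) d
  have e3 := (le_eigRad hd h0 h1 hs hk).trans (mul_le_mul_of_nonneg_left e2 (by positivity))
  linarith

lemma tendsto_ratio {ρ : ℕ → ℝ} (hρ : Filter.Tendsto ρ Filter.atTop Filter.atTop) (c C : ℝ)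
    (d : ℕ) : Filter.Tendsto (fun k => ((ρ k - c) / (ρ k + C)) ^ d) Filter.atTop (nhds 1) := by
  have h1 : Filter.Tendsto (fun k => (c + C) / (ρ k + C)) Filter.atTop (nhds 0) :=
    (Filter.tendsto_atTop_add_const_right _ C hρ).const_div_atTop _
  have h2 := ((tendsto_const_nhds (x := (1 : ℝ))).sub h1).pow d
  simp only [sub_zero, one_pow] at h2
  refine h2.congr' ?_
  filter_upwards [hρ.eventually_gt_atTop (-C)] with k hk
  have : ρ k + C ≠ 0 := by linarith
  congr 1
  field_simp
  ring

/-- The volumes of minimisers tend to the volume of the cube. -/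
lemma tendsto_volume {d : ℕ} (hd : 2 ≤ d) {h : Fin d → ℝ} (h0 : ∀ j, 0 ≤ h j)
    (h1 : ∀ j, h j ≤ 1 / 2) {S : ℕ → Fin d → ℝ} (hS : ∀ k, 1 ≤ k → ∀ j, 0 < S k j)
    (hP : ∀ k, 1 ≤ k → cuboidPerimeter d (S k) = 1)
    (hmin : ∀ k, 1 ≤ k → shiftEig h (S k) k ≤ shiftEig h (fun _ => cubeSide d) k) :
    Filter.Tendsto (fun k => (∏ i, S k i) / cubeSide d ^ d) Filter.atTop (nhds 1) := by
  have hd1 : 1 ≤ d := by omega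
  have hq0 := cubeSide_pos hd1
  have hq : ∀ _ : Fin d, 0 < cubeSide d := fun _ => hq0
  set Q : Fin d → ℝ := fun _ => cubeSide d with hQ
  set c := diagLen Q with hc
  have hρ : Filter.Tendsto (fun k => eigRad h Q k) Filter.atTop Filter.atTop :=
    eigRad_tendsto hd1 h0 h1 hq
  have hprod : ∏ j, Q j = cubeSide d ^ d := by simp [hQ]
  have hle : ∀ k, 1 ≤ k → eigRad h (S k) k ≤ eigRad h Q k := fun k hk =>
    div_le_div_of_nonneg_right (Real.sqrt_le_sqrt (hmin k hk)) Real.pi_pos.le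
  -- crude volume bound, valid without any a priori control of the shape
  have hcrude : ∀ᶠ k in Filter.atTop, cubeSide d ^ d * (1 / 6) ^ d ≤ ∏ i, S k i := by
    filter_upwards [Filter.eventually_ge_atTop 1, hρ.eventually_ge_atTop (2 * c)] with k hk hk2
    have hc0 : 0 < c := diagLen_pos hd1 hq
    have e1 := volume_compare hd1 h0 h1 (hS k hk) hq hk (hle k hk) (by linarith)
      ((diagLen_le_eigRad hd1 h0 h1 (hS k hk) hk).trans
        (mul_le_mul_of_nonneg_left (hle k hk) zero_le_two))
    rw [hprod, le_div_iff₀ (by positivity)] at e1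
    have e2 : (1 / 6 : ℝ) ≤ (eigRad h Q k - c) / (eigRad h Q k + 2 * eigRad h Q k) := by
      rw [div_le_div_iff₀ (by norm_num) (by linarith)]
      linarith
    have e3 := pow_le_pow_left₀ (by norm_num) e2 d
    have e4 := mul_le_mul_of_nonneg_right e3 (by positivity : 0 ≤ cubeSide d ^ d)
    linarith
  set δ := 2 * (cubeSide d ^ d * (1 / 6) ^ d) with hδ
  have hδ0 : 0 < δ := by positivity
  -- hence the sides stay away from zero and `diagLen` stays bounded
  have hdiag : ∀ᶠ k in Filter.atTop, diagLen (S k) ≤ √(∑ _j : Fin d, (1 / δ) ^ 2) := by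
    filter_upwards [Filter.eventually_ge_atTop 1, hcrude] with k hk hk2
    refine Real.sqrt_le_sqrt (Finset.sum_le_sum fun j _ => ?_)
    have h2 := side_ge_of_volume (hS k hk) (hP k hk) hk2 j
    have := hS k hk j
    exact pow_le_pow_left₀ (by positivity) (one_div_le_one_div_of_le hδ0 h2) 2
  refine tendsto_of_tendsto_of_tendsto_of_le_of_le'
    (tendsto_ratio hρ c (√(∑ _j : Fin d, (1 / δ) ^ 2)) d) tendsto_const_nhds ?_ ?_
  · filter_upwards [Filter.eventually_ge_atTop 1, hdiag, hρ.eventually_ge_atTop c]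
      with k hk hk2 hk3
    have e1 := volume_compare hd1 h0 h1 (hS k hk) hq hk (hle k hk) hk3 hk2
    rwa [hprod] at e1
  · filter_upwards [Filter.eventually_ge_atTop 1] with k hk
    exact volume_le_cube hd (hS k hk) (hP k hk)

/-- The shift vector of the `(a, 0, d - a)`-Zaremba problem. -/
noncomputable def zarShift (d a : ℕ) : Fin d → ℝ := fun j => if (j : ℕ) < a then 0 else 1 / 2

lemma cuboidZarembaEig_eq (d a : ℕ) (s : Fin d → ℝ) (k : ℕ) :
    cuboidZarembaEig d a 0 s k = shiftEig (zarShift d a) s k := by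
  have key : ∀ (i : Fin d → ℕ+) (j : Fin d),
      (if (j : ℕ) < a then ((i j : ℕ) : ℝ) ^ 2
         else if (j : ℕ) < a + 0 then (((i j : ℕ) : ℝ) - 1) ^ 2
         else (((i j : ℕ) : ℝ) - 1 / 2) ^ 2) = (((i j : ℕ) : ℝ) - zarShift d a j) ^ 2 := by
    intro i j
    by_cases hj : (j : ℕ) < a <;> simp [zarShift, hj]
  simp only [cuboidZarembaEig, shiftEig, idx, key]

theorem statement_2 (d a c : ℕ) (hd : 3 ≤ d) (hac : a + c = d) :
    (∀ k : ℕ, 1 ≤ k → ∃ s : Fin d → ℝ, PerimMinimizer d a 0 k s) ∧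
    ∀ S : ℕ → Fin d → ℝ, (∀ k : ℕ, 1 ≤ k → PerimMinimizer d a 0 k (S k)) →
      ∀ j : Fin d, Filter.Tendsto (fun k => S k j) Filter.atTop
        (nhds ((2 * (d : ℝ)) ^ (-(1 : ℝ) / ((d : ℝ) - 1)))) := by
  have h0 : ∀ j, 0 ≤ zarShift d a j := fun j => by
    unfold zarShift; split_ifs <;> norm_num
  have h1 : ∀ j, zarShift d a j ≤ 1 / 2 := fun j => by
    unfold zarShift; split_ifs <;> norm_num
  constructor
  · intro k hk
    simp only [PerimMinimizer, cuboidZarembaEig_eq]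
    exact exists_min hd h0 h1 hk
  · intro S hS
    simp only [PerimMinimizer, cuboidZarembaEig_eq] at hS
    refine tendsto_side_of_tendsto_volume (by omega) (fun k hk => (hS k hk).1)
      (fun k hk => (hS k hk).2.1) ?_
    exact tendsto_volume (by omega) h0 h1 (fun k hk => (hS k hk).1) (fun k hk => (hS k hk).2.1)
      fun k hk => (hS k hk).2.2 _ (fun _ => cubeSide_pos (by omega))
        (cuboidPerimeter_cube (by omega))
end

section
/- Fix d ≥ 2 and nonnegative integers a, b, c with a + b + c = d. There exists N ∈ ℕ such that for all k ≥ N there exists a cuboid R_k = (0,a₁^{(k)})×⋯×(0,a_d^{(k)}) with diam(R_k) = 1 such that ζ_k^{(a,b,c)}(R_k) = inf{ζ_k^{(a,b,c)}(R) : R a d-dimensional cuboid with diam(R) = 1}. Moreover, for any such sequence of minimisers, a_j^{(k)} → d^{−1/2} as k → ∞ for each j = 1,…,d (the minimisers converge to the cube of unit diameter), and if b = 0 one may take N = 1. -/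
/-!
Write the counting function of the cuboid `s` at level `π² T²` as the number of positive lattice
points `i` with `∑ (mⱼ / sⱼ)² ≤ T²`, where `iⱼ - 1 ≤ mⱼ ≤ iⱼ`. Comparing the union of the unit
cells `∏ [iⱼ - 1, iⱼ)` of the counted points with positive orthants of ellipsoids (`packing`,
`covering`, and the triangle inequality `sum_add_sq_le`) gives two-sided Weyl bounds
`v rᵈ ∏ sⱼ` with `r = T ± M`, `M ≥ (∑ 1 / sⱼ²)^{1/2}` and `v` the volume of the positive orthant of
the unit ball (`count_le_weyl`, `weyl_le_count`). A cruder bound, `∏ (T sⱼ + 1)`, holds without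
control on the `1 / sⱼ` (`count_le_box`).

Fix `T` by `ζ_k(cube) = π² T²`. If `s` has unit diameter and `ζ_k(s) ≤ ζ_k(cube)`, then `k` is at
least about `v Tᵈ ∏ cubeⱼ` by the lower bound for the cube, and at most
`((T + 1) sⱼ + 1) (T + 2)^{d-1}` by the crude bound for `s`. So for large `k` all sides of such `s`
are at least some `δ > 0` not depending on `k` (`exists_side_bound`).

* Convergence: with the sides bounded below, the Weyl bounds for a minimiser and for the cube show
  that the volume of the minimiser is asymptotically at least that of the cube. The cube is the
  unique cuboid of unit diameter with at least its own volume (`eq_cube_of_prod_ge`), so by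
  compactness it is the only cluster point of the minimisers (`tendsto_minimizers`).
* Existence: it is enough to minimise over the compact set of unit-diameter cuboids with sides at
  least `δ`, and `ζ_k` is lower semicontinuous there since it scales under dilation and decreases
  in the side lengths (`exists_minimizer`, `eig_scale`). When `b = 0` every mode has all `mⱼ ≥ 1/2`,
  which bounds the sides below for each `k ≥ 1` (`side_bound_of_no_neumann`).
-/

open scoped BigOperators

/-- The diameter of the cuboid with side lengths `s`: `(Σⱼ (s j)²)^{1/2}`. -/
noncomputable def cuboidDiameter (d : ℕ) (s : Fin d → ℝ) : ℝ :=
  Real.sqrt (∑ j : Fin d, (s j) ^ 2)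

/-- `s` describes a cuboid of unit diameter minimising the `k`-th `(a,b,c)`-Zaremba
eigenvalue among all cuboids of unit diameter. -/
def DiamMinimizer (d a b k : ℕ) (s : Fin d → ℝ) : Prop :=
  (∀ j, 0 < s j) ∧ cuboidDiameter d s = 1 ∧
  ∀ s' : Fin d → ℝ, (∀ j, 0 < s' j) → cuboidDiameter d s' = 1 →
    cuboidZarembaEig d a b s k ≤ cuboidZarembaEig d a b s' k

/-- For all `k ≥ N` a minimiser of the `k`-th `(a,b,c)`-Zaremba eigenvalue among cuboids of
unit diameter exists, and every sequence of such minimisers converges to the cube of unit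
diameter (each side length tends to `d^{-1/2}`). -/
def DiamOptimalityFrom (d a b N : ℕ) : Prop :=
  (∀ k : ℕ, N ≤ k → ∃ s : Fin d → ℝ, DiamMinimizer d a b k s) ∧
  ∀ S : ℕ → Fin d → ℝ, (∀ k : ℕ, N ≤ k → DiamMinimizer d a b k (S k)) →
    ∀ j : Fin d, Filter.Tendsto (fun k => S k j) Filter.atTop
      (nhds ((Real.sqrt (d : ℝ))⁻¹))

namespace Zaremba

open MeasureTheory Set

/-! ### Modes and the counting function -/

/-- The number `m` for which the `n`-th one-dimensional eigenvalue in direction `j` of an interval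
of length `ℓ` is `π² (m / ℓ)²`: Dirichlet for `j < a`, Neumann for `a ≤ j < a + b`, mixed beyond. -/
noncomputable def freq (a b j : ℕ) (n : ℕ+) : ℝ :=
  if j < a then ((n : ℕ) : ℝ)
  else if j < a + b then ((n : ℕ) : ℝ) - 1 else ((n : ℕ) : ℝ) - 1 / 2

/-- The lattice points whose eigenvalue on the cuboid `s` is at most `t`. The text repeats the set
in `cuboidZarembaEig`, so that `eig_eq` holds by definition. -/
def modes (d a b : ℕ) (s : Fin d → ℝ) (t : ℝ) : Set (Fin d → ℕ+) :=
  {i : Fin d → ℕ+ |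
      Real.pi ^ 2 * ∑ j : Fin d,
        (if (j : ℕ) < a then ((i j : ℕ) : ℝ) ^ 2
         else if (j : ℕ) < a + b then (((i j : ℕ) : ℝ) - 1) ^ 2
         else (((i j : ℕ) : ℝ) - 1 / 2) ^ 2) / (s j) ^ 2 ≤ t}

lemma one_le_cast (n : ℕ+) : (1 : ℝ) ≤ ((n : ℕ) : ℝ) := by exact_mod_cast (one_le : 1 ≤ n)

lemma freq_nonneg (a b j : ℕ) (n : ℕ+) : 0 ≤ freq a b j n := by
  have := one_le_cast n
  unfold freq; split_ifs <;> linarith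

lemma freq_le (a b j : ℕ) (n : ℕ+) : freq a b j n ≤ (n : ℕ) := by
  unfold freq; split_ifs <;> linarith

lemma le_freq_add_one (a b j : ℕ) (n : ℕ+) : ((n : ℕ) : ℝ) ≤ freq a b j n + 1 := by
  unfold freq; split_ifs <;> linarith

lemma half_le_freq (a j : ℕ) (n : ℕ+) : 1 / 2 ≤ freq a 0 j n := by
  have := one_le_cast n
  unfold freq; split_ifs <;> linarith

lemma mem_modes {d a b : ℕ} {s : Fin d → ℝ} {t : ℝ} {i : Fin d → ℕ+} :
    i ∈ modes d a b s t ↔ Real.pi ^ 2 * ∑ j : Fin d, (freq a b j (i j) / s j) ^ 2 ≤ t := by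
  have : ∀ j : Fin d, (if (j : ℕ) < a then ((i j : ℕ) : ℝ) ^ 2
         else if (j : ℕ) < a + b then (((i j : ℕ) : ℝ) - 1) ^ 2
         else (((i j : ℕ) : ℝ) - 1 / 2) ^ 2) / (s j) ^ 2 = (freq a b j (i j) / s j) ^ 2 := by
    intro j
    unfold freq
    split_ifs <;> rw [div_pow]
  simp only [modes, mem_ofPred_eq, this]

lemma mem_modes_pi {d a b : ℕ} {s : Fin d → ℝ} {T : ℝ} {i : Fin d → ℕ+} :
    i ∈ modes d a b s (Real.pi ^ 2 * T ^ 2) ↔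
      ∑ j : Fin d, (freq a b j (i j) / s j) ^ 2 ≤ T ^ 2 := by
  rw [mem_modes, mul_le_mul_iff_right₀ (by positivity)]

lemma modes_mono {d a b : ℕ} {s : Fin d → ℝ} {t t' : ℝ} (h : t ≤ t') :
    modes d a b s t ⊆ modes d a b s t' := fun _ hi => le_trans hi h

/-- Eigenvalues decrease in the side lengths, and scale by `r⁻²` under dilation by `r`. -/
lemma modes_scale {d a b : ℕ} {s s' : Fin d → ℝ} {t r : ℝ} (hr : 0 < r) (hs : ∀ j, 0 < s j)
    (h : ∀ j, s j ≤ r * s' j) : modes d a b s t ⊆ modes d a b s' (r ^ 2 * t) := by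
  intro i hi
  rw [mem_modes] at *
  refine le_trans ?_ (mul_le_mul_of_nonneg_left hi (by positivity : 0 ≤ r ^ 2))
  rw [mul_left_comm]
  refine mul_le_mul_of_nonneg_left ?_ (sq_nonneg _)
  rw [Finset.mul_sum]
  refine Finset.sum_le_sum fun j _ => ?_
  rw [← mul_pow]
  have hs' : 0 < s' j := pos_of_mul_pos_right ((hs j).trans_le (h j)) hr.le
  have h0 := freq_nonneg a b j (i j)
  gcongr
  rw [mul_div_assoc', div_le_div_iff₀ hs' (hs j)]
  nlinarith [mul_le_mul_of_nonneg_left (h j) h0]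

lemma zero_le_of_mem_modes {d a b : ℕ} {s : Fin d → ℝ} {t : ℝ} {i : Fin d → ℕ+}
    (hi : i ∈ modes d a b s t) : 0 ≤ t := by
  rw [mem_modes] at hi
  exact le_trans (by positivity) hi

lemma exists_mem_modes {d a b k : ℕ} {s : Fin d → ℝ} {t : ℝ} (hk : 1 ≤ k)
    (h : (k : ℕ∞) ≤ (modes d a b s t).encard) : ∃ i, i ∈ modes d a b s t := by
  have : (modes d a b s t).encard ≠ 0 := by
    intro h0
    rw [h0] at h
    have : k = 0 := by exact_mod_cast le_antisymm h zero_le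
    omega
  exact Set.encard_ne_zero.mp this

lemma eig_eq (d a b : ℕ) (s : Fin d → ℝ) (k : ℕ) :
    cuboidZarembaEig d a b s k = sInf {t : ℝ | (k : ℕ∞) ≤ (modes d a b s t).encard} := rfl

lemma zero_mem_lowerBounds {d a b k : ℕ} (s : Fin d → ℝ) (hk : 1 ≤ k) :
    0 ∈ lowerBounds {t : ℝ | (k : ℕ∞) ≤ (modes d a b s t).encard} := by
  intro t ht
  obtain ⟨i, hi⟩ := exists_mem_modes hk ht
  exact zero_le_of_mem_modes hi

lemma eig_nonneg {d a b k : ℕ} (s : Fin d → ℝ) (hk : 1 ≤ k) :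
    0 ≤ cuboidZarembaEig d a b s k :=
  Real.sInf_nonneg (zero_mem_lowerBounds s hk)

lemma nonempty_levels {d : ℕ} (hd : 2 ≤ d) (a b k : ℕ) (s : Fin d → ℝ) :
    {t : ℝ | (k : ℕ∞) ≤ (modes d a b s t).encard}.Nonempty := by
  have : Nonempty (Fin d) := ⟨⟨0, by omega⟩⟩
  obtain ⟨F, hF⟩ := Infinite.exists_subset_card_eq (Fin d → ℕ+) k
  obtain ⟨t, ht⟩ := (F.image fun i : Fin d → ℕ+ =>
    Real.pi ^ 2 * ∑ j : Fin d, (freq a b j (i j) / s j) ^ 2).bddAbove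
  refine ⟨t, ?_⟩
  have : (F : Set (Fin d → ℕ+)) ⊆ modes d a b s t := by
    intro i hi
    rw [mem_modes]
    exact ht (by simpa using ⟨i, hi, rfl⟩)
  have h2 := Set.encard_le_encard this
  rw [Set.encard_coe_eq_coe_finsetCard, hF] at h2
  exact h2

lemma not_le_of_lt_eig {d a b k : ℕ} {s : Fin d → ℝ} {t : ℝ} (hk : 1 ≤ k)
    (h : t < cuboidZarembaEig d a b s k) : ¬ (k : ℕ∞) ≤ (modes d a b s t).encard :=
  fun h' => notMem_of_lt_csInf h ⟨0, zero_mem_lowerBounds s hk⟩ h'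

lemma le_of_eig_lt {d a b k : ℕ} {s : Fin d → ℝ} {t : ℝ} (hd : 2 ≤ d)
    (h : cuboidZarembaEig d a b s k < t) : (k : ℕ∞) ≤ (modes d a b s t).encard := by
  obtain ⟨t', ht', hlt⟩ := exists_lt_of_csInf_lt (nonempty_levels hd a b k s) h
  exact le_trans ht' (Set.encard_le_encard (modes_mono hlt.le))

lemma eig_le_of_le {d a b k : ℕ} {s : Fin d → ℝ} {t : ℝ} (hk : 1 ≤ k)
    (h : (k : ℕ∞) ≤ (modes d a b s t).encard) : cuboidZarembaEig d a b s k ≤ t :=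
  csInf_le ⟨0, zero_mem_lowerBounds s hk⟩ h

lemma eig_scale {d a b k : ℕ} {s s' : Fin d → ℝ} {r : ℝ} (hd : 2 ≤ d) (hk : 1 ≤ k) (hr : 0 < r)
    (hs : ∀ j, 0 < s j) (h : ∀ j, s j ≤ r * s' j) :
    cuboidZarembaEig d a b s' k ≤ r ^ 2 * cuboidZarembaEig d a b s k := by
  rw [mul_comm, ← div_le_iff₀ (by positivity)]
  refine le_of_forall_gt_imp_ge_of_dense fun t ht => ?_
  rw [div_le_iff₀ (by positivity), mul_comm]
  exact eig_le_of_le hk ((le_of_eig_lt hd ht).trans (Set.encard_le_encard (modes_scale hr hs h)))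

/-! ### Packing -/

/-- The half-open unit cell with upper corner `i`. -/
def cell {d : ℕ} (i : Fin d → ℕ+) : Set (Fin d → ℝ) :=
  Set.pi univ fun j => Ico (((i j : ℕ) : ℝ) - 1) ((i j : ℕ) : ℝ)

lemma volume_cell {d : ℕ} (i : Fin d → ℕ+) : volume (cell i) = 1 := by
  rw [cell, Real.volume_pi_Ico]; simp

lemma measurableSet_cell {d : ℕ} (i : Fin d → ℕ+) : MeasurableSet (cell i) :=
  MeasurableSet.univ_pi fun _ => measurableSet_Ico

lemma cell_disjoint {d : ℕ} {i i' : Fin d → ℕ+} (h : i ≠ i') : Disjoint (cell i) (cell i') := by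
  rw [Set.disjoint_left]
  intro x hx hx'
  apply h
  funext j
  have h1 := hx j (mem_univ j)
  have h2 := hx' j (mem_univ j)
  simp only [mem_Ico] at h1 h2
  have h3 : ((i j : ℕ) : ℝ) < ((i' j : ℕ) : ℝ) + 1 := by linarith
  have h4 : ((i' j : ℕ) : ℝ) < ((i j : ℕ) : ℝ) + 1 := by linarith
  have h5 : (i j : ℕ) < i' j + 1 := by exact_mod_cast h3
  have h6 : (i' j : ℕ) < i j + 1 := by exact_mod_cast h4
  exact PNat.eq (by omega)

/-- If `U` contains the cells of at least `k` points, then its volume is at least `k`. -/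
lemma packing {d k : ℕ} {A : Set (Fin d → ℕ+)} {U : Set (Fin d → ℝ)}
    (hA : (k : ℕ∞) ≤ A.encard) (hU : ∀ i ∈ A, cell i ⊆ U) : (k : ENNReal) ≤ volume U := by
  obtain ⟨B, hBA, hB⟩ := Set.exists_subset_encard_eq hA
  have hfin : B.Finite := Set.finite_of_encard_eq_coe hB
  lift B to Finset (Fin d → ℕ+) using hfin
  rw [Set.encard_coe_eq_coe_finsetCard] at hB
  have hcard : B.card = k := by exact_mod_cast hB
  calc (k : ENNReal) = ∑ i ∈ B, volume (cell i) := by simp [volume_cell, hcard]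
    _ = volume (⋃ i ∈ B, cell i) :=
      (measure_biUnion_finset (fun i _ i' _ h => cell_disjoint h)
        fun i _ => measurableSet_cell i).symm
    _ ≤ volume U := measure_mono (iUnion₂_subset fun i hi => hU i (hBA hi))

/-- If `U` is covered by the cells of fewer than `k` points, then its volume is at most `k`. -/
lemma covering {d k : ℕ} {A : Set (Fin d → ℕ+)} {U : Set (Fin d → ℝ)}
    (hA : ¬ (k : ℕ∞) ≤ A.encard) (hU : ∀ x ∈ U, ∃ i ∈ A, x ∈ cell i) :
    volume U ≤ (k : ENNReal) := by
  have hlt := not_le.mp hA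
  have hfin : A.Finite := Set.finite_of_encard_le_coe hlt.le
  lift A to Finset (Fin d → ℕ+) using hfin
  rw [Set.encard_coe_eq_coe_finsetCard] at hlt
  have hcard : A.card ≤ k := by exact_mod_cast hlt.le
  calc volume U ≤ volume (⋃ i ∈ A, cell i) := measure_mono fun x hx => by
        obtain ⟨i, hi, hx⟩ := hU x hx
        exact mem_iUnion₂.mpr ⟨i, hi, hx⟩
    _ ≤ ∑ i ∈ A, volume (cell i) := measure_biUnion_finset_le _ _
    _ = A.card := by simp [volume_cell]
    _ ≤ k := by exact_mod_cast hcard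

/-- The part in the closed positive orthant of the ellipsoid with semi-axes `r * s j`. -/
def orthant {d : ℕ} (s : Fin d → ℝ) (r : ℝ) : Set (Fin d → ℝ) :=
  {x | (∀ j, 0 ≤ x j) ∧ ∑ j, (x j / s j) ^ 2 ≤ r ^ 2}

/-- The volume of the part of the unit ball in the positive orthant. -/
noncomputable def ballVol (d : ℕ) : ℝ := (volume (orthant (fun _ : Fin d => 1) 1)).toReal

lemma volume_orthant_one_ne_top (d : ℕ) : volume (orthant (fun _ : Fin d => 1) 1) ≠ ⊤ := by
  have hsub : orthant (fun _ : Fin d => 1) 1 ⊆ Icc 0 1 := by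
    rintro x ⟨h0, h1⟩
    refine ⟨h0, fun j => ?_⟩
    have := Finset.single_le_sum (f := fun j => (x j / 1) ^ 2) (fun j _ => sq_nonneg _)
      (Finset.mem_univ j)
    simp only [div_one, one_pow, Pi.one_apply] at *
    nlinarith
  refine ne_top_of_le_ne_top ?_ (measure_mono hsub)
  rw [Real.volume_Icc_pi]; simp

lemma ballVol_pos {d : ℕ} (hd : 2 ≤ d) : 0 < ballVol d := by
  have hd0 : (2 : ℝ) ≤ d := by exact_mod_cast hd
  have hsub : Icc (0 : Fin d → ℝ) (fun _ => (1 / d : ℝ)) ⊆ orthant (fun _ : Fin d => 1) 1 := by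
    rintro x ⟨h0, h1⟩
    refine ⟨h0, ?_⟩
    calc ∑ j, (x j / 1) ^ 2 ≤ ∑ _j : Fin d, (1 / d : ℝ) ^ 2 := by
          refine Finset.sum_le_sum fun j _ => ?_
          rw [div_one]
          exact pow_le_pow_left₀ (h0 j) (h1 j) 2
      _ = 1 / d := by simp; field_simp
      _ ≤ 1 ^ 2 := by rw [div_le_iff₀ (by linarith)]; linarith
  refine ENNReal.toReal_pos ?_ (volume_orthant_one_ne_top d)
  have h := measure_mono (μ := volume) hsub
  rw [Real.volume_Icc_pi] at h
  refine (lt_of_lt_of_le ?_ h).ne'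
  simp only [Pi.zero_apply, sub_zero, Finset.prod_const]
  refine ENNReal.pow_pos (ENNReal.ofReal_pos.mpr (by positivity)) _

lemma volume_orthant {d : ℕ} {s : Fin d → ℝ} {r : ℝ} (hs : ∀ j, 0 < s j) (hr : 0 < r) :
    volume (orthant s r) = ENNReal.ofReal (ballVol d * r ^ d * ∏ j, s j) := by
  let D : Matrix (Fin d) (Fin d) ℝ := Matrix.diagonal fun j => (r * s j)⁻¹
  have hdet : LinearMap.det (Matrix.toLin' D) = (r ^ d * ∏ j, s j)⁻¹ := by
    rw [LinearMap.det_toLin', Matrix.det_diagonal, Finset.prod_inv_distrib, Finset.prod_mul_distrib]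
    simp
  have hpos : 0 < r ^ d * ∏ j, s j := mul_pos (by positivity) (Finset.prod_pos fun j _ => hs j)
  have hpre : orthant s r = Matrix.toLin' D ⁻¹' orthant (fun _ : Fin d => 1) 1 := by
    ext x
    have hx : ∀ j, Matrix.toLin' D x j = (r * s j)⁻¹ * x j := fun j => by
      rw [Matrix.toLin'_apply, Matrix.mulVec_diagonal]
    simp only [orthant, mem_preimage, mem_ofPred_eq, hx]
    refine and_congr (forall_congr' fun j => ?_) ?_
    · have : 0 < (r * s j)⁻¹ := inv_pos.mpr (mul_pos hr (hs j))
      exact (mul_nonneg_iff_of_pos_left this).symm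
    · have : ∀ j, ((r * s j)⁻¹ * x j / 1) ^ 2 = (x j / s j) ^ 2 / r ^ 2 := fun j => by
        have := (hs j).ne'
        field_simp
      simp only [this, ← Finset.sum_div, one_pow]
      rw [div_le_one (by positivity)]
  rw [hpre, Measure.addHaar_preimage_linearMap _ (by rw [hdet]; positivity), hdet, inv_inv,
    abs_of_pos hpos, mul_assoc, mul_comm (ballVol d), ENNReal.ofReal_mul hpos.le, ballVol,
    ENNReal.ofReal_toReal (volume_orthant_one_ne_top d)]

/-- The triangle inequality for the Euclidean norm, in squared form. -/
lemma sum_add_sq_le {ι : Type*} [Fintype ι] {u v : ι → ℝ} {A B : ℝ} (hA : 0 ≤ A) (hB : 0 ≤ B)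
    (hu : ∑ j, u j ^ 2 ≤ A ^ 2) (hv : ∑ j, v j ^ 2 ≤ B ^ 2) :
    ∑ j, (u j + v j) ^ 2 ≤ (A + B) ^ 2 := by
  have hcs := Finset.sum_mul_sq_le_sq_mul_sq Finset.univ u v
  have h1 : (∑ j, u j * v j) ^ 2 ≤ (A * B) ^ 2 := by
    rw [mul_pow]
    exact hcs.trans (mul_le_mul hu hv (Finset.sum_nonneg fun _ _ => sq_nonneg _) (sq_nonneg _))
  have h2 := abs_le_of_sq_le_sq' h1 (by positivity)
  have h3 : ∑ j, (u j + v j) ^ 2 = ∑ j, u j ^ 2 + 2 * ∑ j, u j * v j + ∑ j, v j ^ 2 := by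
    rw [Finset.mul_sum, ← Finset.sum_add_distrib, ← Finset.sum_add_distrib]
    exact Finset.sum_congr rfl fun j _ => by ring
  rw [h3]; nlinarith [h2.2]

/-- A counted point has `iⱼ ≤ T sⱼ + 1` in every direction, so its cell lies in the corresponding
box. This bound stays useful when a side degenerates. -/
lemma count_le_box {d a b k : ℕ} {s : Fin d → ℝ} {T : ℝ} (hs : ∀ j, 0 < s j) (hT : 0 ≤ T)
    (h : (k : ℕ∞) ≤ (modes d a b s (Real.pi ^ 2 * T ^ 2)).encard) :
    (k : ℝ) ≤ ∏ j, (T * s j + 1) := by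
  have hp := packing (U := Icc 0 fun j => T * s j + 1) h (by
    intro i hi x hx
    rw [mem_modes_pi] at hi
    refine ⟨fun j => ?_, fun j => ?_⟩
    · have := (hx j (mem_univ j)).1
      have h1 := one_le_cast (i j)
      simp only [Pi.zero_apply]
      linarith
    · have h2 := (hx j (mem_univ j)).2
      have h3 := Finset.single_le_sum (f := fun j : Fin d => (freq a b j (i j) / s j) ^ 2)
        (fun j _ => sq_nonneg _) (Finset.mem_univ j)
      have h4 := (abs_le_of_sq_le_sq' (h3.trans hi) hT).2
      rw [div_le_iff₀ (hs j)] at h4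
      have h5 := le_freq_add_one a b j (i j)
      linarith)
  rw [Real.volume_Icc_pi] at hp
  simp only [Pi.zero_apply, sub_zero] at hp
  have h0 : ∀ j ∈ (Finset.univ : Finset (Fin d)), 0 ≤ T * s j + 1 := fun j _ => by
    have := hs j
    positivity
  rw [← ENNReal.ofReal_prod_of_nonneg h0, ← ENNReal.ofReal_natCast] at hp
  exact (ENNReal.ofReal_le_ofReal_iff (Finset.prod_nonneg h0)).mp hp

/-- Points of the cell of `i` have `xⱼ ≤ mⱼ + 1`, so the cells of the counted points lie in the
ellipsoid enlarged by the norm of `1 / s`. -/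
lemma count_le_weyl {d a b k : ℕ} {s : Fin d → ℝ} {T M : ℝ} (hs : ∀ j, 0 < s j) (hT : 0 ≤ T)
    (hM : 0 < M) (hsM : ∑ j, (1 / s j) ^ 2 ≤ M ^ 2)
    (h : (k : ℕ∞) ≤ (modes d a b s (Real.pi ^ 2 * T ^ 2)).encard) :
    (k : ℝ) ≤ ballVol d * (T + M) ^ d * ∏ j, s j := by
  have hp := packing (U := orthant s (T + M)) h (by
    intro i hi x hx
    rw [mem_modes_pi] at hi
    have hx0 : ∀ j, 0 ≤ x j := fun j => by
      have := (hx j (mem_univ j)).1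
      have h1 := one_le_cast (i j)
      linarith
    refine ⟨hx0, le_trans ?_ (sum_add_sq_le hT hM.le hi hsM)⟩
    gcongr with j
    · exact div_nonneg (hx0 j) (hs j).le
    · rw [← add_div]
      have h2 := (hx j (mem_univ j)).2
      have h5 := le_freq_add_one a b j (i j)
      exact div_le_div_of_nonneg_right (by linarith) (hs j).le)
  rw [volume_orthant hs (by positivity), ← ENNReal.ofReal_natCast] at hp
  refine (ENNReal.ofReal_le_ofReal_iff ?_).mp hp
  have := Finset.prod_nonneg fun j (_ : j ∈ (Finset.univ : Finset (Fin d))) => (hs j).le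
  have h' : 0 ≤ ballVol d := ENNReal.toReal_nonneg
  positivity

/-- A point `x` of the ellipsoid lies in the cell of `i = ⌊x⌋ + 1`, for which `mⱼ ≤ xⱼ + 1`; hence
the cells of the modes at the level `r + M` cover it. -/
lemma weyl_le_count {d a b k : ℕ} {s : Fin d → ℝ} {r M : ℝ} (hs : ∀ j, 0 < s j) (hr : 0 < r)
    (hM : 0 < M) (hsM : ∑ j, (1 / s j) ^ 2 ≤ M ^ 2)
    (h : ¬ (k : ℕ∞) ≤ (modes d a b s (Real.pi ^ 2 * (r + M) ^ 2)).encard) :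
    ballVol d * r ^ d * ∏ j, s j ≤ k := by
  have hp := covering (U := orthant s r) h (by
    rintro x ⟨hx0, hx⟩
    refine ⟨fun j => Nat.succPNat ⌊x j⌋₊, ?_, fun j _ => ?_⟩
    · rw [mem_modes_pi]
      refine le_trans ?_ (sum_add_sq_le hr.le hM.le hx hsM)
      gcongr with j
      · exact div_nonneg (freq_nonneg _ _ _ _) (hs j).le
      · rw [← add_div]
        refine div_le_div_of_nonneg_right ((freq_le _ _ _ _).trans ?_) (hs j).le
        simpa using Nat.floor_le (hx0 j)
    · simpa using ⟨Nat.floor_le (hx0 j), Nat.lt_floor_add_one (x j)⟩)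
  rw [volume_orthant hs hr, ← ENNReal.ofReal_natCast] at hp
  exact (ENNReal.ofReal_le_ofReal_iff (by positivity)).mp hp

/-! ### Cuboids of unit diameter and the isoperimetric step -/

/-- `s` lists the sides of a genuine cuboid of unit diameter. -/
def UnitDiam {d : ℕ} (s : Fin d → ℝ) : Prop := (∀ j, 0 < s j) ∧ cuboidDiameter d s = 1

/-- The cube of unit diameter. -/
noncomputable def cube (d : ℕ) : Fin d → ℝ := fun _ => (Real.sqrt (d : ℝ))⁻¹

lemma diam_eq_one_iff {d : ℕ} {s : Fin d → ℝ} : cuboidDiameter d s = 1 ↔ ∑ j, s j ^ 2 = 1 :=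
  Real.sqrt_eq_one

lemma le_one_of_sum_sq {d : ℕ} {s : Fin d → ℝ} (h : ∑ j, s j ^ 2 = 1) (j : Fin d) : s j ≤ 1 := by
  have := Finset.single_le_sum (f := fun j => s j ^ 2) (fun j _ => sq_nonneg _)
    (Finset.mem_univ j)
  nlinarith

lemma cube_unitDiam {d : ℕ} (hd : 2 ≤ d) : UnitDiam (cube d) := by
  have hd0 : (0 : ℝ) < d := by exact_mod_cast (by omega : 0 < d)
  refine ⟨fun j => inv_pos.mpr (Real.sqrt_pos.mpr hd0), diam_eq_one_iff.mpr ?_⟩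
  simp only [cube, inv_pow, Real.sq_sqrt hd0.le, Finset.sum_const, Finset.card_univ,
    Fintype.card_fin, nsmul_eq_mul]
  exact mul_inv_cancel₀ hd0.ne'

/-- The equality case of the AM-GM inequality for the squared sides: among unit-diameter cuboids
only the cube has volume at least that of the cube. It follows from `log x < x - 1` for `x ≠ 1`. -/
lemma eq_cube_of_prod_ge {d : ℕ} (hd : 2 ≤ d) {s : Fin d → ℝ} (h0 : ∀ j, 0 ≤ s j)
    (h1 : ∑ j, s j ^ 2 = 1) (hP : ∏ j, cube d j ≤ ∏ j, s j) : s = cube d := by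
  have hd0 : (0 : ℝ) < d := by exact_mod_cast (by omega : 0 < d)
  have hc : ∀ j, 0 < cube d j := (cube_unitDiam hd).1
  have hPpos : 0 < ∏ j, s j := (Finset.prod_pos fun j _ => hc j).trans_le hP
  have hs : ∀ j, 0 < s j := fun j => (h0 j).lt_of_ne' fun h =>
    hPpos.ne' (Finset.prod_eq_zero (Finset.mem_univ j) h)
  by_contra hne
  obtain ⟨j0, hj0⟩ : ∃ j, s j ≠ cube d j := by
    by_contra! h
    exact hne (funext h)
  -- The `x j` have mean `1`, so `∑ log (x j) ≤ ∑ (x j - 1) = 0`, strictly unless all equal `1`.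
  let x : Fin d → ℝ := fun j => (s j / cube d j) ^ 2
  have hx : ∀ j, 0 < x j := fun j => by have := hs j; have := hc j; positivity
  have hx0 : x j0 ≠ 1 := by
    intro h
    have h2 : s j0 / cube d j0 = 1 :=
      (pow_eq_one_iff_of_nonneg (div_pos (hs j0) (hc j0)).le two_ne_zero).mp h
    exact hj0 ((div_eq_one_iff_eq (hc j0).ne').mp h2)
  have hlog : ∑ j, Real.log (x j) < ∑ j, (x j - 1) :=
    Finset.sum_lt_sum (fun j _ => Real.log_le_sub_one_of_pos (hx j))
      ⟨j0, Finset.mem_univ j0, Real.log_lt_sub_one_of_pos (hx j0) hx0⟩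
  have hsum : ∑ j, (x j - 1) = 0 := by
    have : ∀ j, x j = s j ^ 2 * d := fun j => by
      simp only [x, cube, div_inv_eq_mul, mul_pow, Real.sq_sqrt hd0.le]
    simp only [this, Finset.sum_sub_distrib, ← Finset.sum_mul, h1]
    simp
  have hprod : 1 ≤ ∏ j, x j := by
    simp only [x, Finset.prod_pow, Finset.prod_div_distrib]
    exact one_le_pow₀ ((one_le_div (Finset.prod_pos fun j _ => hc j)).mpr hP)
  rw [hsum, ← Real.log_prod (fun j _ => (hx j).ne')] at hlog
  exact absurd (Real.log_nonneg hprod) (not_le.mpr hlog)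

/-! ### Two-sided Weyl bounds -/

/-- The frequency `T` with `π² T² = ζ_k(cube)`, see `eig_cube`. -/
noncomputable def cubeFreq (d a b k : ℕ) : ℝ :=
  Real.sqrt (cuboidZarembaEig d a b (cube d) k) / Real.pi

lemma cubeFreq_nonneg (d a b k : ℕ) : 0 ≤ cubeFreq d a b k := by
  unfold cubeFreq; positivity

lemma eig_cube {d a b k : ℕ} (hk : 1 ≤ k) :
    cuboidZarembaEig d a b (cube d) k = Real.pi ^ 2 * cubeFreq d a b k ^ 2 := by
  rw [cubeFreq, div_pow, Real.sq_sqrt (eig_nonneg _ hk)]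
  field_simp

/-- The level is raised from `T` to `T + 1` so that it lies strictly above the infimum, whether or
not the infimum is attained; the shift does not matter asymptotically. -/
lemma le_modes_of_le_cube {d a b k : ℕ} (hd : 2 ≤ d) (hk : 1 ≤ k) {s : Fin d → ℝ}
    (h : cuboidZarembaEig d a b s k ≤ cuboidZarembaEig d a b (cube d) k) :
    (k : ℕ∞) ≤ (modes d a b s (Real.pi ^ 2 * (cubeFreq d a b k + 1) ^ 2)).encard := by
  refine le_of_eig_lt hd (h.trans_lt ?_)
  rw [eig_cube hk]
  have := cubeFreq_nonneg d a b k
  gcongr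
  linarith

/-- For the cube, `∑ 1 / sⱼ² = d²`. The count is taken at the level `T - 1`, strictly below the
eigenvalue, whence the shift `d + 1`. -/
lemma weyl_cube {d a b k : ℕ} (hd : 2 ≤ d) (hk : 1 ≤ k) (hT : d + 1 < cubeFreq d a b k) :
    ballVol d * (cubeFreq d a b k - (d + 1)) ^ d * ∏ j, cube d j ≤ k := by
  have hd0 : (0 : ℝ) < d := by exact_mod_cast (by omega : 0 < d)
  refine weyl_le_count (a := a) (b := b) (M := d) (cube_unitDiam hd).1 (by linarith) hd0 ?_ ?_
  · simp only [cube, one_div, inv_inv, Real.sq_sqrt hd0.le]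
    simp [sq]
  · refine not_le_of_lt_eig hk ?_
    rw [eig_cube hk]
    gcongr
    linarith

lemma tendsto_cubeFreq {d : ℕ} (hd : 2 ≤ d) (a b : ℕ) :
    Filter.Tendsto (cubeFreq d a b) Filter.atTop Filter.atTop := by
  have hbound : ∀ k : ℕ, 1 ≤ k → (k : ℝ) ≤ (cubeFreq d a b k + 2) ^ d := by
    intro k hk
    have hT := cubeFreq_nonneg d a b k
    have h := count_le_box (cube_unitDiam hd).1 (by linarith) (le_modes_of_le_cube hd hk le_rfl)
    refine h.trans ?_
    calc ∏ j, ((cubeFreq d a b k + 1) * cube d j + 1) ≤ ∏ _j : Fin d, (cubeFreq d a b k + 2) := by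
          refine Finset.prod_le_prod (fun j _ => ?_) fun j _ => ?_
          · have := (cube_unitDiam hd).1 j
            positivity
          · have := le_one_of_sum_sq (diam_eq_one_iff.mp (cube_unitDiam hd).2) j
            nlinarith
      _ = _ := by simp
  refine Filter.tendsto_atTop.mpr fun A => ?_
  filter_upwards [Filter.eventually_ge_atTop 1,
    tendsto_natCast_atTop_atTop.eventually_gt_atTop ((|A| + 2) ^ d)] with k hk hkA
  by_contra! hlt
  have hT := cubeFreq_nonneg d a b k
  have : (cubeFreq d a b k + 2) ^ d ≤ (|A| + 2) ^ d := by
    gcongr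
    exact hlt.le.trans (le_abs_self A)
  linarith [hbound k hk]

/-- For large `k`, unit-diameter cuboids at least as good as the cube have all sides bounded below,
uniformly in `k`. -/
lemma exists_side_bound {d : ℕ} (hd : 2 ≤ d) (a b : ℕ) : ∃ δ : ℝ, 0 < δ ∧
    ∀ᶠ k in Filter.atTop, ∀ s : Fin d → ℝ, UnitDiam s →
      cuboidZarembaEig d a b s k ≤ cuboidZarembaEig d a b (cube d) k → ∀ j, δ ≤ s j := by
  have hd0 : (0 : ℝ) < d := by exact_mod_cast (by omega : 0 < d)
  have hP : 0 < ∏ j, cube d j := Finset.prod_pos fun j _ => (cube_unitDiam hd).1 j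
  have hv := ballVol_pos hd
  set c : ℝ := ballVol d * (1 / 2) ^ d * ∏ j, cube d j with hc
  have hcpos : 0 < c := by positivity
  refine ⟨c / 2, by positivity, ?_⟩
  filter_upwards [Filter.eventually_ge_atTop 1,
    (tendsto_cubeFreq hd a b).eventually_ge_atTop (2 * d + 4),
    (tendsto_cubeFreq hd a b).eventually_ge_atTop (2 / c)] with k hk hT1 hT2 s hs hle j
  set T := cubeFreq d a b k
  have hs1 := le_one_of_sum_sq (diam_eq_one_iff.mp hs.2)
  have hup := count_le_box hs.1 (by linarith) (le_modes_of_le_cube hd hk hle)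
  have hlow := weyl_cube hd hk (show (d : ℝ) + 1 < T by linarith)
  have hlow' : c * (T + 2) ^ d ≤ k := by
    refine le_trans ?_ hlow
    -- This is where `T ≥ 2 d + 4` is used.
    have : ((T + 2) / 2) ^ d ≤ (T - (d + 1)) ^ d := by gcongr <;> linarith
    calc c * (T + 2) ^ d = ballVol d * ((T + 2) / 2) ^ d * ∏ j, cube d j := by
          rw [hc, div_pow, div_pow]; ring
      _ ≤ _ := by gcongr
  have hup' : (k : ℝ) ≤ ((T + 1) * s j + 1) * (T + 2) ^ (d - 1) := by
    refine hup.trans ?_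
    rw [← Finset.mul_prod_erase _ _ (Finset.mem_univ j)]
    have hj := hs.1 j
    refine mul_le_mul_of_nonneg_left ?_ (by nlinarith)
    calc ∏ i ∈ Finset.univ.erase j, ((T + 1) * s i + 1)
        ≤ ∏ _i ∈ Finset.univ.erase j, (T + 2) := by
          refine Finset.prod_le_prod (fun i _ => ?_) fun i _ => ?_
          · have := hs.1 i
            nlinarith
          · have := hs1 i
            nlinarith
      _ = _ := by simp
  have hpow : (T + 2) ^ d = (T + 2) * (T + 2) ^ (d - 1) := by
    rw [← pow_succ', Nat.sub_add_cancel (by omega)]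
  have h3 : c * (T + 2) ≤ (T + 1) * s j + 1 := by
    have : 0 < (T + 2) ^ (d - 1) := by
      have : 0 < T + 2 := by linarith
      positivity
    refine le_of_mul_le_mul_right ?_ this
    calc c * (T + 2) * (T + 2) ^ (d - 1) = c * (T + 2) ^ d := by rw [hpow]; ring
      _ ≤ _ := hlow'.trans hup'
  have h4 : 2 ≤ T * c := (div_le_iff₀ hcpos).mp hT2
  have hj := hs.1 j
  by_contra! hlt
  have hTpos : 0 < T := by linarith
  nlinarith

/-! ### Convergence -/

lemma isCompact_unit (d : ℕ) (δ : ℝ) :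
    IsCompact {s : Fin d → ℝ | (∀ j, δ ≤ s j) ∧ ∑ j, s j ^ 2 = 1} := by
  have hclosed : IsClosed {s : Fin d → ℝ | (∀ j, δ ≤ s j) ∧ ∑ j, s j ^ 2 = 1} := by
    refine IsClosed.inter (s₁ := {s : Fin d → ℝ | ∀ j, δ ≤ s j}) ?_
      (isClosed_eq (by fun_prop) continuous_const)
    rw [Set.ofPred_forall]
    exact isClosed_iInter fun j => isClosed_le continuous_const (continuous_apply j)
  refine (isCompact_Icc (a := fun _ : Fin d => δ) (b := fun _ => (1 : ℝ))).of_isClosed_subset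
    hclosed ?_
  rintro s ⟨h0, h1⟩
  exact ⟨h0, le_one_of_sum_sq h1⟩

lemma tendsto_minimizers {d : ℕ} (hd : 2 ≤ d) (a b : ℕ) {S : ℕ → Fin d → ℝ}
    (hS : ∀ᶠ k in Filter.atTop, DiamMinimizer d a b k (S k)) :
    Filter.Tendsto S Filter.atTop (nhds (cube d)) := by
  have hd0 : (0 : ℝ) < d := by exact_mod_cast (by omega : 0 < d)
  have hP : 0 < ∏ j, cube d j := Finset.prod_pos fun j _ => (cube_unitDiam hd).1 j
  have hv := ballVol_pos hd
  obtain ⟨δ, hδ, hside⟩ := exists_side_bound hd a b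
  set M : ℝ := d / δ with hM
  have hMpos : 0 < M := by positivity
  have hlower : ∀ᶠ k in Filter.atTop,
      (∏ j, cube d j) * ((cubeFreq d a b k - (d + 1)) / (cubeFreq d a b k + 1 + M)) ^ d
        ≤ ∏ j, S k j := by
    filter_upwards [Filter.eventually_ge_atTop 1, hS, hside,
      (tendsto_cubeFreq hd a b).eventually_gt_atTop (d + 1)] with k hk hmin hsk hT
    have hle := hmin.2.2 _ (cube_unitDiam hd).1 (cube_unitDiam hd).2
    have hδs := hsk (S k) ⟨hmin.1, hmin.2.1⟩ hle
    have hsM : ∑ j, (1 / S k j) ^ 2 ≤ M ^ 2 := by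
      calc ∑ j, (1 / S k j) ^ 2 ≤ ∑ _j : Fin d, (1 / δ) ^ 2 := by
            refine Finset.sum_le_sum fun j _ => ?_
            have := hmin.1 j
            have := hδs j
            gcongr
        _ = d * (1 / δ) ^ 2 := by simp
        _ ≤ d ^ 2 * (1 / δ) ^ 2 := by
            have : (1 : ℝ) ≤ d := by exact_mod_cast (by omega : 1 ≤ d)
            gcongr
            nlinarith
        _ = M ^ 2 := by rw [hM]; ring
    have hup := count_le_weyl hmin.1 (by linarith) hMpos hsM (le_modes_of_le_cube hd hk hle)
    have hlow := weyl_cube hd hk hT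
    have h := hlow.trans hup
    have hpos : 0 < (cubeFreq d a b k + 1 + M) ^ d := by
      have : 0 < cubeFreq d a b k + 1 + M := by linarith
      positivity
    rw [div_pow, mul_div_assoc', div_le_iff₀ hpos]
    refine le_of_mul_le_mul_left ?_ hv
    linarith
  -- The ratio of the two Weyl radii tends to `1`, as both differ from `T` by bounded amounts.
  have hratio : Filter.Tendsto (fun k => (∏ j, cube d j) *
      ((cubeFreq d a b k - (d + 1)) / (cubeFreq d a b k + 1 + M)) ^ d) Filter.atTop
      (nhds (∏ j, cube d j)) := by
    have h1 : Filter.Tendsto (fun T : ℝ => (T - (d + 1)) / (T + 1 + M)) Filter.atTop (nhds 1) := by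
      have h2 : Filter.Tendsto (fun T : ℝ => 1 - (d + 2 + M) / (T + 1 + M)) Filter.atTop
          (nhds (1 - 0)) := by
        refine tendsto_const_nhds.sub (Filter.Tendsto.div_atTop tendsto_const_nhds ?_)
        simp only [add_assoc]
        exact Filter.tendsto_atTop_add_const_right _ _ Filter.tendsto_id
      rw [sub_zero] at h2
      refine h2.congr' ?_
      filter_upwards [Filter.eventually_gt_atTop 0] with T hT
      have : T + 1 + M ≠ 0 := by positivity
      field_simp
      ring
    simpa using ((h1.comp (tendsto_cubeFreq hd a b)).pow d).const_mul (∏ j, cube d j)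
  refine (isCompact_unit d 0).tendsto_nhds_of_unique_mapClusterPt ?_ ?_
  · filter_upwards [hS] with k hk
    exact ⟨fun j => (hk.1 j).le, diam_eq_one_iff.mp hk.2.1⟩
  · rintro s ⟨h0, h1⟩ hcl
    refine eq_cube_of_prod_ge hd h0 h1 ?_
    by_contra! hlt
    obtain ⟨p, hp1, hp2⟩ := exists_between hlt
    have hcont : Continuous fun s : Fin d → ℝ => ∏ j, s j := by fun_prop
    have hfreq := hcl.frequently (hcont.continuousAt.eventually (gt_mem_nhds hp1))
    obtain ⟨k, hk1, hk2, hk3⟩ :=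
      (hfreq.and_eventually (hlower.and (hratio.eventually (lt_mem_nhds hp2)))).exists
    exact absurd hk1 (not_lt.mpr (hk3.le.trans hk2))

/-! ### Existence -/

/-- A minimiser exists as soon as the competitors that are at least as good as the cube have sides
bounded away from `0`. -/
lemma exists_minimizer {d a b k : ℕ} (hd : 2 ≤ d) (hk : 1 ≤ k) {δ : ℝ} (hδ : 0 < δ)
    (h : ∀ s : Fin d → ℝ, UnitDiam s →
      cuboidZarembaEig d a b s k ≤ cuboidZarembaEig d a b (cube d) k → ∀ j, δ ≤ s j) :
    ∃ s, DiamMinimizer d a b k s := by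
  have hcube : cube d ∈ {s : Fin d → ℝ | (∀ j, δ ≤ s j) ∧ ∑ j, s j ^ 2 = 1} :=
    ⟨h _ (cube_unitDiam hd) le_rfl, diam_eq_one_iff.mp (cube_unitDiam hd).2⟩
  have hlsc : LowerSemicontinuousOn (fun s => cuboidZarembaEig d a b s k)
      {s : Fin d → ℝ | (∀ j, δ ≤ s j) ∧ ∑ j, s j ^ 2 = 1} := by
    intro s₀ hs₀ y hy
    have hs₀pos : ∀ j, 0 < s₀ j := fun j => hδ.trans_le (hs₀.1 j)
    -- Near `s₀` every `s` satisfies `s ≤ r s₀` for a fixed `r > 1` close to `1`, so `eig_scale`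
    -- gives `ζ_k(s₀) ≤ r² ζ_k(s)`.
    obtain ⟨r, hr, hry⟩ : ∃ r : ℝ, 1 < r ∧ r ^ 2 * y < cuboidZarembaEig d a b s₀ k := by
      have hcont : Filter.Tendsto (fun r : ℝ => r ^ 2 * y) (nhdsWithin 1 (Ioi 1)) (nhds y) := by
        have : Continuous fun r : ℝ => r ^ 2 * y := by fun_prop
        simpa using (this.tendsto 1).mono_left nhdsWithin_le_nhds
      exact ((eventually_mem_nhdsWithin (a := (1 : ℝ)) (s := Ioi 1)).and (hcont.eventually (gt_mem_nhds hy))).exists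
    have hnear : ∀ᶠ s in nhdsWithin s₀ {s : Fin d → ℝ | (∀ j, δ ≤ s j) ∧ ∑ j, s j ^ 2 = 1},
        ∀ j, s j < r * s₀ j := by
      refine Filter.eventually_all.mpr fun j => ?_
      refine Filter.Eventually.filter_mono nhdsWithin_le_nhds ?_
      exact (continuous_apply j).continuousAt.eventually
        (gt_mem_nhds (by have := hs₀pos j; nlinarith))
    filter_upwards [hnear, self_mem_nhdsWithin] with s hs hmem
    have hscale := eig_scale (a := a) (b := b) hd hk (by linarith : 0 < r)
      (fun j => hδ.trans_le (hmem.1 j)) fun j => (hs j).le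
    exact lt_of_mul_lt_mul_left (hry.trans_le hscale) (sq_nonneg r)
  obtain ⟨s, hs, hmin⟩ := hlsc.exists_isMinOn ⟨_, hcube⟩ (isCompact_unit d δ)
  refine ⟨s, fun j => hδ.trans_le (hs.1 j), diam_eq_one_iff.mpr hs.2, fun s' hs' hs'1 => ?_⟩
  by_cases hle : cuboidZarembaEig d a b s' k ≤ cuboidZarembaEig d a b (cube d) k
  · exact hmin ⟨h s' ⟨hs', hs'1⟩ hle, diam_eq_one_iff.mp hs'1⟩
  · exact (hmin hcube).trans (not_le.mp hle).le

/-- Without Neumann directions each term `(mⱼ / sⱼ)²` is at least `1 / (4 sⱼ²)`, so a short side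
makes every eigenvalue large. -/
lemma side_bound_of_no_neumann {d a k : ℕ} (hd : 2 ≤ d) (hk : 1 ≤ k) : ∃ δ : ℝ, 0 < δ ∧
    ∀ s : Fin d → ℝ, UnitDiam s →
      cuboidZarembaEig d a 0 s k ≤ cuboidZarembaEig d a 0 (cube d) k → ∀ j, δ ≤ s j := by
  set T := cubeFreq d a 0 k + 1 with hT
  have hTpos : 0 < T := by have := cubeFreq_nonneg d a 0 k; linarith
  refine ⟨1 / (2 * T), by positivity, fun s hs hle j => ?_⟩
  obtain ⟨i, hi⟩ := exists_mem_modes hk (le_modes_of_le_cube hd hk hle)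
  rw [mem_modes_pi] at hi
  have h3 := Finset.single_le_sum (f := fun j : Fin d => (freq a 0 j (i j) / s j) ^ 2)
    (fun j _ => sq_nonneg _) (Finset.mem_univ j)
  have h4 := (abs_le_of_sq_le_sq' (h3.trans hi) hTpos.le).2
  rw [div_le_iff₀ (hs.1 j)] at h4
  have h5 := half_le_freq a j (i j)
  rw [div_le_iff₀ (by positivity)]
  linarith

lemma optimality_of_exists {d a b N : ℕ} (hd : 2 ≤ d)
    (h : ∀ k : ℕ, N ≤ k → ∃ s : Fin d → ℝ, DiamMinimizer d a b k s) :
    DiamOptimalityFrom d a b N := by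
  refine ⟨h, fun S hS j => ?_⟩
  exact (tendsto_pi_nhds.mp (tendsto_minimizers hd a b
    (Filter.eventually_atTop.mpr ⟨N, hS⟩))) j

end Zaremba


theorem statement_4 (d a b c : ℕ) (hd : 2 ≤ d) (habc : a + b + c = d) :
    (∃ N : ℕ, 1 ≤ N ∧ DiamOptimalityFrom d a b N) ∧
    (b = 0 → DiamOptimalityFrom d a b 1) := by
  refine ⟨?_, ?_⟩
  · obtain ⟨δ, hδ, hside⟩ := Zaremba.exists_side_bound hd a b
    obtain ⟨N, hN⟩ := Filter.eventually_atTop.mp hside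
    refine ⟨max N 1, le_max_right _ _, Zaremba.optimality_of_exists hd fun k hk => ?_⟩
    exact Zaremba.exists_minimizer hd ((le_max_right _ _).trans hk) hδ (hN k ((le_max_left _ _).trans hk))
  · rintro rfl
    refine Zaremba.optimality_of_exists hd fun k hk => ?_
    obtain ⟨δ, hδ, h⟩ := Zaremba.side_bound_of_no_neumann (a := a) hd hk
    exact Zaremba.exists_minimizer hd hk hδ h
end

section
/- Fix d ≥ 2 and nonnegative integers a, c with a + c = d (so b = 0). Then for every d-dimensional cuboid R and every k ≥ 1, ζ_k^{(a,0,c)}(R) ≥ 2^{−c} W_d k^{2/d} |R|^{−2/d}. -/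
/-! The number of positive integer points `i` in the ellipsoid `∑ (i j / b j) ^ 2 ≤ r ^ 2` is at most
`2 ^ (-d) ω_d r ^ d ∏ b j`: to each such point attach the set of `x` with
`i j - 1 < |x j| * b j ≤ i j` for all `j`. These sets are disjoint, have volume `2 ^ d / ∏ b j`, and
lie in the ball of radius `r` (`card_mul_le_ball`).

This is Pólya's inequality for the Dirichlet spectrum of a cuboid. The half-integer directions reduce
to it because `i - 1 / 2 ≥ i / 2` for `i ≥ 1`, so that they may be replaced by integer directions at
the price of doubling the side. Doubling `c` sides multiplies the volume by `2 ^ c` and hence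
costs a factor `2 ^ (-2 c / d)` in the eigenvalue bound, which is at least `2 ^ (-c)` since `d ≥ 2`. -/

open scoped BigOperators

/-- `ω_d`, the Lebesgue volume of the unit ball in `ℝ^d`. -/
noncomputable def unitBallVol (d : ℕ) : ℝ :=
  (MeasureTheory.volume (Metric.ball (0 : EuclideanSpace ℝ (Fin d)) 1)).toReal

/-- The Weyl constant `W_d = 4π² ω_d^{-2/d}`. -/
noncomputable def weylConst (d : ℕ) : ℝ :=
  4 * Real.pi ^ 2 * unitBallVol d ^ (-(2 : ℝ) / (d : ℝ))

open MeasureTheory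

/-- The pair of intervals consisting of the reals `y` with `n - 1 < |y| * b ≤ n`. -/
def shell (b : ℝ) (n : ℕ+) : Set ℝ := {y | ((n : ℕ) : ℝ) - 1 < |y| * b ∧ |y| * b ≤ (n : ℕ)}

lemma shell_eq {b : ℝ} (hb : 0 < b) (n : ℕ+) :
    shell b n = Set.Icc (-(((n : ℕ) : ℝ) / b)) (((n : ℕ) : ℝ) / b) \
      Set.Icc (-((((n : ℕ) : ℝ) - 1) / b)) ((((n : ℕ) : ℝ) - 1) / b) := by
  ext y
  rw [Set.mem_sdiff, Set.mem_Icc, Set.mem_Icc, ← abs_le, ← abs_le, le_div_iff₀ hb, le_div_iff₀ hb,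
    not_le, and_comm]
  rfl

lemma measurableSet_shell {b : ℝ} (hb : 0 < b) (n : ℕ+) : MeasurableSet (shell b n) := by
  rw [shell_eq hb]
  exact measurableSet_Icc.diff measurableSet_Icc

lemma volume_shell {b : ℝ} (hb : 0 < b) (n : ℕ+) :
    volume (shell b n) = ENNReal.ofReal (2 / b) := by
  have hn : (1 : ℝ) ≤ ((n : ℕ) : ℝ) := by exact_mod_cast n.pos
  have h1 : (((n : ℕ) : ℝ) - 1) / b ≤ ((n : ℕ) : ℝ) / b := by gcongr; linarith
  have h0 : 0 ≤ (((n : ℕ) : ℝ) - 1) / b := div_nonneg (by linarith) hb.le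
  rw [shell_eq hb, measure_sdiff (Set.Icc_subset_Icc (by linarith) h1)
    measurableSet_Icc.nullMeasurableSet (by simp), Real.volume_Icc, Real.volume_Icc,
    ← ENNReal.ofReal_sub _ (by linarith)]
  congr 1
  field_simp
  ring

lemma shell_inj {b y : ℝ} {m n : ℕ+} (hm : y ∈ shell b m) (hn : y ∈ shell b n) : m = n := by
  obtain ⟨h1, h2⟩ := hm
  obtain ⟨h3, h4⟩ := hn
  have h5 : ((m : ℕ) : ℝ) < ((n : ℕ) : ℝ) + 1 := by linarith
  have h6 : ((n : ℕ) : ℝ) < ((m : ℕ) : ℝ) + 1 := by linarith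
  have h7 : (m : ℕ) < n + 1 := by exact_mod_cast h5
  have h8 : (n : ℕ) < m + 1 := by exact_mod_cast h6
  exact PNat.eq (by omega)

/-- Lattice point count in an ellipsoid: comparison of the volume of the product shells attached to
the points of `F` with the volume of a ball containing them. -/
lemma card_mul_le_ball {d : ℕ} {b : Fin d → ℝ} (hb : ∀ j, 0 < b j) {r : ℝ} (hr : 0 ≤ r)
    (F : Finset (Fin d → ℕ+))
    (hF : ∀ i ∈ F, ∑ j, (((i j : ℕ) : ℝ) / b j) ^ 2 ≤ r ^ 2) :
    (F.card : ℝ) * ∏ j, (2 / b j) ≤ r ^ d * unitBallVol d := by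
  set B : (Fin d → ℕ+) → Set (Fin d → ℝ) := fun i => Set.pi Set.univ fun j => shell (b j) (i j)
  have hBm : ∀ i, MeasurableSet (B i) := fun i =>
    MeasurableSet.univ_pi fun j => measurableSet_shell (hb j) _
  have hBv : ∀ i, volume (B i) = ENNReal.ofReal (∏ j, (2 / b j)) := fun i => by
    rw [volume_pi_pi, ENNReal.ofReal_prod_of_nonneg fun j _ => (div_pos two_pos (hb j)).le]
    exact Finset.prod_congr rfl fun j _ => volume_shell (hb j) _
  have hdisj : (F : Set (Fin d → ℕ+)).PairwiseDisjoint B := by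
    intro i _ i' _ hne
    refine Set.disjoint_left.2 fun x hx hx' => hne ?_
    funext j
    exact shell_inj (hx j trivial) (hx' j trivial)
  have hsub : (⋃ i ∈ F, B i) ⊆
      (WithLp.toLp 2 : (Fin d → ℝ) → EuclideanSpace ℝ (Fin d)) ⁻¹' Metric.closedBall 0 r := by
    intro x hx
    simp only [Set.mem_iUnion] at hx
    obtain ⟨i, hi, hx⟩ := hx
    rw [Set.mem_preimage, mem_closedBall_zero_iff, EuclideanSpace.norm_eq]
    refine Real.sqrt_le_iff.2 ⟨hr, le_trans (Finset.sum_le_sum fun j _ => ?_) (hF i hi)⟩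
    have := (hx j trivial).2
    rw [Real.norm_eq_abs]
    exact pow_le_pow_left₀ (abs_nonneg _) ((le_div_iff₀ (hb j)).2 this) 2
  have hvol := measure_mono (μ := volume) hsub
  rw [measure_biUnion_finset hdisj fun i _ => hBm i, Finset.sum_congr rfl fun i _ => hBv i,
    Finset.sum_const,
    (PiLp.volume_preserving_toLp (Fin d)).measure_preimage
      Metric.isClosed_closedBall.measurableSet.nullMeasurableSet,
    Measure.addHaar_closedBall _ _ hr, finrank_euclideanSpace_fin] at hvol
  have h := ENNReal.toReal_mono
    (ENNReal.mul_ne_top ENNReal.ofReal_ne_top measure_ball_lt_top.ne) hvol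
  rwa [nsmul_eq_mul, ENNReal.toReal_mul, ENNReal.toReal_mul, ENNReal.toReal_natCast,
    ENNReal.toReal_ofReal (Finset.prod_nonneg fun j _ => (div_pos two_pos (hb j)).le),
    ENNReal.toReal_ofReal (pow_nonneg hr d)] at h

lemma unitBallVol_pos (d : ℕ) : 0 < unitBallVol d :=
  ENNReal.toReal_pos (Metric.measure_ball_pos _ _ one_pos).ne' measure_ball_lt_top.ne

/-- Passage from the counting bound `k ≤ 2 ^ (c - d) V w r ^ d` to the eigenvalue bound; the hypothesis
`2 ≤ d` enters through `2 c / d ≤ c`. -/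
lemma bound_of_count {d c : ℕ} (hd : 2 ≤ d) {k V w r : ℝ} (hk : 0 ≤ k) (hV : 0 < V) (hw : 0 < w)
    (hr : 0 ≤ r) (h : k * 2 ^ d ≤ r ^ d * w * (2 ^ c * V)) :
    (2 : ℝ) ^ (-(c : ℝ)) * (4 * Real.pi ^ 2 * w ^ (-(2 : ℝ) / (d : ℝ))) * k ^ ((2 : ℝ) / (d : ℝ)) *
      V ^ (-(2 : ℝ) / (d : ℝ)) ≤ Real.pi ^ 2 * r ^ 2 := by
  have hd' : (2 : ℝ) ≤ d := by exact_mod_cast hd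
  set p : ℝ := 2 / d with hp
  have hp0 : 0 ≤ p := by positivity
  have hpow : ∀ x : ℝ, 0 ≤ x → (x ^ d) ^ p = x ^ 2 := fun x hx => by
    rw [← Real.rpow_natCast, ← Real.rpow_mul hx, hp, mul_div_cancel₀ _ (by positivity)]
    exact_mod_cast Real.rpow_natCast x 2
  have h1 := Real.rpow_le_rpow (by positivity) h hp0
  rw [Real.mul_rpow hk (by positivity), Real.mul_rpow (by positivity) (by positivity),
    Real.mul_rpow (by positivity) hw.le, Real.mul_rpow (by positivity) hV.le, hpow _ zero_le_two,
    hpow _ hr] at h1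
  have h2 : ((2 : ℝ) ^ c) ^ p ≤ 2 ^ (c : ℝ) := by
    rw [← Real.rpow_natCast, ← Real.rpow_mul zero_le_two]
    refine Real.rpow_le_rpow_of_exponent_le one_le_two (mul_le_of_le_one_right (by positivity) ?_)
    rw [hp]
    exact (div_le_one (by linarith)).2 hd'
  have hwp : 0 < w ^ p := Real.rpow_pos_of_pos hw _
  have hVp : 0 < V ^ p := Real.rpow_pos_of_pos hV _
  have h2c : (0 : ℝ) < 2 ^ (c : ℝ) := Real.rpow_pos_of_pos two_pos _
  have h3 : k ^ p * 4 ≤ r ^ 2 * w ^ p * (2 ^ (c : ℝ) * V ^ p) := by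
    calc k ^ p * 4 = k ^ p * 2 ^ 2 := by norm_num
      _ ≤ _ := h1
      _ ≤ _ := by gcongr
  rw [neg_div, ← hp, Real.rpow_neg zero_le_two, Real.rpow_neg hw.le, Real.rpow_neg hV.le]
  calc _ = Real.pi ^ 2 * ((k ^ p * 4) / (w ^ p * (2 ^ (c : ℝ) * V ^ p))) := by field_simp
    _ ≤ _ := by
      gcongr
      rw [div_le_iff₀ (by positivity)]
      linarith

theorem statement_5 (d a c : ℕ) (hd : 2 ≤ d) (hac : a + c = d)
    (s : Fin d → ℝ) (hs : ∀ j, 0 < s j) (k : ℕ) (hk : 1 ≤ k) :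
    (2 : ℝ) ^ (-(c : ℝ)) * weylConst d * (k : ℝ) ^ ((2 : ℝ) / (d : ℝ)) *
      cuboidVolume d s ^ (-(2 : ℝ) / (d : ℝ)) ≤ cuboidZarembaEig d a 0 s k := by
  subst hac
  set b : Fin (a + c) → ℝ := fun j => (if (j : ℕ) < a then 1 else 2) * s j with hbdef
  have hb : ∀ j, 0 < b j := fun j => mul_pos (by split_ifs <;> norm_num) (hs j)
  have hprod : ∏ j, b j = 2 ^ c * cuboidVolume (a + c) s := by
    rw [hbdef, Finset.prod_mul_distrib, cuboidVolume, Fin.prod_univ_add]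
    simp
  have hV : 0 < cuboidVolume (a + c) s := Finset.prod_pos fun j _ => hs j
  set f : (Fin (a + c) → ℕ+) → ℝ := fun i => Real.pi ^ 2 * ∑ j : Fin (a + c),
        (if (j : ℕ) < a then ((i j : ℕ) : ℝ) ^ 2
         else if (j : ℕ) < a + 0 then (((i j : ℕ) : ℝ) - 1) ^ 2
         else (((i j : ℕ) : ℝ) - 1 / 2) ^ 2) / (s j) ^ 2 with hf
  -- Replacing half-integer directions by integer ones with doubled side decreases the form.
  have hlow : ∀ i, Real.pi ^ 2 * ∑ j, (((i j : ℕ) : ℝ) / b j) ^ 2 ≤ f i := fun i => by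
    refine mul_le_mul_of_nonneg_left (Finset.sum_le_sum fun j _ => ?_) (sq_nonneg _)
    have hn : (1 : ℝ) ≤ ((i j : ℕ) : ℝ) := by exact_mod_cast (i j).pos
    have hsj := hs j
    rw [hbdef]
    by_cases hj : (j : ℕ) < a
    · simp [hj, div_pow]
    · simp only [hj, add_zero, if_false]
      rw [← div_pow, mul_comm, ← div_div, div_right_comm]
      gcongr
      linarith
  change _ ≤ sInf {t : ℝ | (k : ℕ∞) ≤ {i | f i ≤ t}.encard}
  refine le_csInf ?_ ?_
  · -- The set of admissible `t` is nonempty, so that the infimum is not the junk value `0`.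
    have : NeZero (a + c) := ⟨by omega⟩
    obtain ⟨F, hF⟩ := Infinite.exists_subset_card_eq (Fin (a + c) → ℕ+) k
    refine ⟨∑ i ∈ F, f i, ?_⟩
    have hsub : (F : Set (Fin (a + c) → ℕ+)) ⊆ {i | f i ≤ ∑ i ∈ F, f i} := fun i hi =>
      Finset.single_le_sum (fun i _ => le_trans (by positivity) (hlow i)) hi
    have := Set.encard_le_encard hsub
    rwa [Set.encard_coe_eq_coe_finsetCard, hF] at this
  · intro t ht
    obtain ⟨T, hT, hTk⟩ := Set.exists_subset_encard_eq (Set.mem_ofPred.1 ht)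
    have hfin : T.Finite := Set.finite_of_encard_eq_coe hTk
    lift T to Finset (Fin (a + c) → ℕ+) using hfin
    rw [Set.encard_coe_eq_coe_finsetCard] at hTk
    have hcard : T.card = k := by exact_mod_cast hTk
    have hpi := Real.pi_pos
    have hle : ∀ i ∈ T, ∑ j, (((i j : ℕ) : ℝ) / b j) ^ 2 ≤ t / Real.pi ^ 2 := fun i hi => by
      rw [le_div_iff₀' (by positivity)]
      exact (hlow i).trans (hT hi)
    obtain ⟨i₀, hi₀⟩ : T.Nonempty := Finset.card_pos.1 (by omega)
    have ht0 : 0 ≤ t / Real.pi ^ 2 := le_trans (by positivity) (hle i₀ hi₀)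
    have hcount := card_mul_le_ball hb (Real.sqrt_nonneg (t / Real.pi ^ 2)) T
      (by rwa [Real.sq_sqrt ht0])
    rw [hcard, Finset.prod_div_distrib, hprod, Finset.prod_const, Finset.card_univ,
      Fintype.card_fin, ← mul_div_assoc, div_le_iff₀ (by positivity)] at hcount
    have := bound_of_count hd (Nat.cast_nonneg k) hV (unitBallVol_pos _) (Real.sqrt_nonneg _) hcount
    rwa [Real.sq_sqrt ht0, mul_div_cancel₀ _ (by positivity)] at this
end

section
/- Let R = (0,a)×(0,b) ⊂ ℝ² with a, b > 0. For every integer k ≥ 1/4 + (ab + 2(a+b))/(4π), one has ζ_k^{(0,0,2)}(R) ≥ 4π(k − 1/4)/(ab + 2(a+b)). -/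
/-!
Put `A = a √t / π` and `B = b √t / π`. The eigenvalues at most `t` correspond to the points
`(i - 1/2, j - 1/2)` in the quarter ellipse under the graph of `f x = B √(1 - (x / A)²)`.
The column over `x = i - 1/2` holds at most `f x + 1/2` points, and there are `m ≤ A + 1/2`
nonempty columns. As `f` is concave, the trapezoidal rule bounds `∑ f (i - 1/2)` by the integral of
`f` up to the two half end terms; the left one is absorbed by the strip `0 ≤ x ≤ 1/2`, where `f`
decreases, and the right one is at most `B / 2`. Hence the number of points is at most
`π A B / 4 + (A + B) / 2 + 1 / 4`, that is, `(a b t + 2 (a + b) √t) / (4 π) + 1 / 4`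
(`count_le`). The hypothesis on `k` forces `t ≥ 1` as soon as this count reaches `k`,
and then `√t ≤ t` gives the claim.
-/

/-- The boundary curve of the upper half of the ellipse with semi-axes `A` and `B`, extended by `0`
outside `[-A, A]` through the junk value of `Real.sqrt`. -/
noncomputable def ellipseArc (A B x : ℝ) : ℝ := B * Real.sqrt (1 - (x / A) ^ 2)

lemma ellipseArc_continuous (A B : ℝ) : Continuous (ellipseArc A B) := by
  unfold ellipseArc
  fun_prop

lemma ellipseArc_nonneg {A B : ℝ} (hB : 0 < B) (x : ℝ) : 0 ≤ ellipseArc A B x := by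
  unfold ellipseArc
  positivity

lemma ellipseArc_le {A B : ℝ} (hB : 0 < B) (x : ℝ) : ellipseArc A B x ≤ B := by
  have h : Real.sqrt (1 - (x / A) ^ 2) ≤ 1 := by
    rw [Real.sqrt_le_iff]
    constructor <;> nlinarith [sq_nonneg (x / A)]
  unfold ellipseArc
  nlinarith

lemma ellipseArc_anti {A B : ℝ} (hA : 0 < A) (hB : 0 < B) {x y : ℝ} (hx : 0 ≤ x) (hxy : x ≤ y) :
    ellipseArc A B y ≤ ellipseArc A B x := by
  unfold ellipseArc
  gcongr

lemma ellipseArc_concave {A B : ℝ} (hA : 0 < A) (hB : 0 < B) {x y u v : ℝ}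
    (hx : 0 ≤ x) (hxA : x ≤ A) (hy : 0 ≤ y) (hyA : y ≤ A) (hu : 0 ≤ u) (hv : 0 ≤ v)
    (huv : u + v = 1) :
    u * ellipseArc A B x + v * ellipseArc A B y ≤ ellipseArc A B (u * x + v * y) := by
  have h1 : 0 ≤ 1 - (x / A) ^ 2 := by
    have : x / A ≤ 1 := (div_le_one hA).2 hxA
    have : 0 ≤ x / A := by positivity
    nlinarith
  have h2 : 0 ≤ 1 - (y / A) ^ 2 := by
    have : y / A ≤ 1 := (div_le_one hA).2 hyA
    have : 0 ≤ y / A := by positivity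
    nlinarith
  have h3 : (u * x + v * y) / A = u * (x / A) + v * (y / A) := by ring
  have key : u * Real.sqrt (1 - (x / A) ^ 2) + v * Real.sqrt (1 - (y / A) ^ 2)
      ≤ Real.sqrt (1 - ((u * x + v * y) / A) ^ 2) := by
    apply Real.le_sqrt_of_sq_le
    rw [h3]
    have e1 := Real.sq_sqrt h1
    have e2 := Real.sq_sqrt h2
    set p := Real.sqrt (1 - (x / A) ^ 2)
    set q := Real.sqrt (1 - (y / A) ^ 2)
    set X := x / A
    set Y := y / A
    obtain rfl : v = 1 - u := by linarith
    -- `(p, X)` and `(q, Y)` are unit vectors, so the difference of the two sides is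
    -- `u * v` times the squared distance between them.
    nlinarith [mul_nonneg (mul_nonneg hu hv) (add_nonneg (sq_nonneg (p - q)) (sq_nonneg (X - Y)))]
  unfold ellipseArc
  nlinarith

/-- For a concave function the trapezoidal rule underestimates the integral. -/
lemma trapezoid_le {A B : ℝ} (hA : 0 < A) (hB : 0 < B) {x : ℝ} (hx : 0 ≤ x) (hxA : x + 1 ≤ A) :
    (ellipseArc A B x + ellipseArc A B (x + 1)) / 2 ≤ ∫ s in x..(x + 1), ellipseArc A B s := by
  have hshift : ∫ s in x..(x + 1), ellipseArc A B s = ∫ s in (0 : ℝ)..1, ellipseArc A B (s + x) := by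
    rw [intervalIntegral.integral_comp_add_right, zero_add, add_comm]
  have hlin : ∫ s in (0 : ℝ)..1, (ellipseArc A B x + s * (ellipseArc A B (x + 1) - ellipseArc A B x))
      = (ellipseArc A B x + ellipseArc A B (x + 1)) / 2 := by
    rw [intervalIntegral.integral_add (by simp)
      (Continuous.intervalIntegrable (by fun_prop) _ _),
      intervalIntegral.integral_mul_const, integral_id, intervalIntegral.integral_const]
    simp only [smul_eq_mul]
    ring
  rw [hshift, ← hlin]
  apply intervalIntegral.integral_mono_on zero_le_one
  · exact Continuous.intervalIntegrable (by fun_prop) _ _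
  · exact ((ellipseArc_continuous A B).comp (by fun_prop)).intervalIntegrable _ _
  · intro s hs
    have h := ellipseArc_concave hA hB (x := x) (y := x + 1) (u := 1 - s) (v := s) hx (by linarith)
      (by linarith) hxA (by linarith [hs.2]) hs.1 (by ring)
    have e : (1 - s) * x + s * (x + 1) = s + x := by ring
    rw [e] at h
    linarith

lemma sum_ellipseArc_le {A B : ℝ} (hA : 0 < A) (hB : 0 < B) (n : ℕ) (hn : (n : ℝ) + 1 / 2 ≤ A) :
    ∑ p ∈ Finset.range (n + 1), ellipseArc A B ((p : ℝ) + 1 / 2) ≤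
      (∫ s in (0 : ℝ)..((n : ℝ) + 1 / 2), ellipseArc A B s) + ellipseArc A B ((n : ℝ) + 1 / 2) / 2 := by
  have hint (x y : ℝ) : IntervalIntegrable (ellipseArc A B) MeasureTheory.volume x y :=
    (ellipseArc_continuous A B).intervalIntegrable _ _
  induction n with
  | zero =>
    have h : ∫ s in (0 : ℝ)..(1 / 2), ellipseArc A B (1 / 2) ≤
        ∫ s in (0 : ℝ)..(1 / 2), ellipseArc A B s :=
      intervalIntegral.integral_mono_on (by norm_num) (by simp) (hint _ _)
        fun s hs => ellipseArc_anti hA hB hs.1 hs.2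
    rw [intervalIntegral.integral_const, smul_eq_mul] at h
    simp only [zero_add, Finset.sum_range_one, Nat.cast_zero]
    linarith
  | succ n ih =>
    push_cast at hn ⊢
    have ih' := ih (by linarith)
    rw [Finset.sum_range_succ]
    have ht := trapezoid_le hA hB (x := (n : ℝ) + 1 / 2) (by positivity) (by linarith)
    have hs := intervalIntegral.integral_add_adjacent_intervals
      (hint 0 ((n : ℝ) + 1 / 2)) (hint ((n : ℝ) + 1 / 2) ((n : ℝ) + 1 / 2 + 1))
    have e : (n : ℝ) + 1 + 1 / 2 = (n : ℝ) + 1 / 2 + 1 := by ring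
    push_cast
    rw [e]
    linarith

lemma integral_ellipseArc_le {A B : ℝ} (hA : 0 < A) (hB : 0 < B) {x : ℝ} (hx : 0 ≤ x)
    (hxA : x ≤ A) : ∫ s in (0 : ℝ)..x, ellipseArc A B s ≤ Real.pi * A * B / 4 := by
  have hint (x y : ℝ) : IntervalIntegrable (ellipseArc A B) MeasureTheory.volume x y :=
    (ellipseArc_continuous A B).intervalIntegrable _ _
  have hmono : ∫ s in (0 : ℝ)..x, ellipseArc A B s ≤ ∫ s in (0 : ℝ)..A, ellipseArc A B s :=
    intervalIntegral.integral_mono_interval le_rfl hx hxA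
      (Filter.Eventually.of_forall fun s => ellipseArc_nonneg hB s) (hint _ _)
  have hsymm : ∫ s in (-A)..0, ellipseArc A B s = ∫ s in (0 : ℝ)..A, ellipseArc A B s := by
    have h := intervalIntegral.integral_comp_neg (a := 0) (b := A) (ellipseArc A B)
    rw [neg_zero] at h
    rw [← h]
    simp only [ellipseArc, neg_div, neg_sq]
  have hadd := intervalIntegral.integral_add_adjacent_intervals (hint (-A) 0) (hint 0 A)
  have hfull : ∫ s in (-A)..A, ellipseArc A B s = B * (A * (Real.pi / 2)) := by
    unfold ellipseArc
    rw [intervalIntegral.integral_const_mul,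
      intervalIntegral.integral_comp_div (fun s => Real.sqrt (1 - s ^ 2)) hA.ne', neg_div,
      div_self hA.ne', integral_sqrt_one_sub_sq, smul_eq_mul]
  linarith

/-- The number of points with positive half-integer coordinates in the ellipse with semi-axes
`A` and `B` is at most the area of the quarter ellipse plus `(A + B) / 2 + 1 / 4`. -/
lemma count_le {A B : ℝ} (hA : 0 < A) (hB : 0 < B) (S : Set (Fin 2 → ℕ+))
    (hS : ∀ i ∈ S, ((((i 0 : ℕ) : ℝ) - 1 / 2) / A) ^ 2 + ((((i 1 : ℕ) : ℝ) - 1 / 2) / B) ^ 2 ≤ 1)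
    (k : ℕ) (hk : (k : ℕ∞) ≤ S.encard) :
    (k : ℝ) ≤ Real.pi * A * B / 4 + (A + B) / 2 + 1 / 4 := by
  set m := ⌊A + 1 / 2⌋₊ with hm
  set h : ℕ → ℕ := fun p => ⌊ellipseArc A B ((p : ℝ) + 1 / 2) + 1 / 2⌋₊ with hh
  set T : Finset (Σ _ : ℕ, ℕ) := (Finset.range m).sigma fun p => Finset.range (h p) with hT
  let φ : (Fin 2 → ℕ+) → (Σ _ : ℕ, ℕ) := fun i => ⟨(i 0).natPred, (i 1).natPred⟩
  have hcast (n : ℕ+) : ((n : ℕ) : ℝ) = (n.natPred : ℝ) + 1 := by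
    rw [← PNat.natPred_add_one n]
    push_cast
    rfl
  have hinj : Function.Injective φ := by
    intro i j hij
    simp only [φ, Sigma.mk.injEq, heq_eq_eq] at hij
    funext l
    fin_cases l
    · exact PNat.natPred_injective hij.1
    · exact PNat.natPred_injective hij.2
  have hmaps : Set.MapsTo φ S (T : Set (Σ _ : ℕ, ℕ)) := by
    intro i hi
    have h0 := hS i hi
    rw [hcast, hcast] at h0
    have hX : 0 ≤ ((((i 0).natPred : ℝ) + 1 - 1 / 2) / A) :=
      div_nonneg (by linarith [Nat.cast_nonneg (α := ℝ) (i 0).natPred]) hA.le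
    simp only [hT, φ, Finset.coe_sigma, Set.mem_sigma_iff, Finset.coe_range, Set.mem_Iio]
    constructor
    · rw [← Nat.succ_le_iff, hm]
      apply Nat.le_floor
      have h1 : (((i 0).natPred : ℝ) + 1 - 1 / 2) / A ≤ 1 := by
        nlinarith [sq_nonneg ((((i 1).natPred : ℝ) + 1 - 1 / 2) / B)]
      rw [div_le_one hA] at h1
      push_cast
      linarith
    · rw [← Nat.succ_le_iff]
      apply Nat.le_floor
      have e : ((i 0).natPred : ℝ) + 1 / 2 = ((i 0).natPred : ℝ) + 1 - 1 / 2 := by ring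
      have h1 : (((i 1).natPred : ℝ) + 1 - 1 / 2) / B ≤
          Real.sqrt (1 - ((((i 0).natPred : ℝ) + 1 / 2) / A) ^ 2) := by
        apply Real.le_sqrt_of_sq_le
        rw [e]
        linarith
      rw [div_le_iff₀ hB] at h1
      unfold ellipseArc
      push_cast
      linarith
  have hkT : k ≤ T.card := by
    have h1 := hk.trans (Set.encard_le_encard_of_injOn hmaps hinj.injOn)
    rw [Set.encard_coe_eq_coe_finsetCard] at h1
    exact_mod_cast h1
  have hcard : (T.card : ℝ) ≤
      ∑ p ∈ Finset.range m, ellipseArc A B ((p : ℝ) + 1 / 2) + (m : ℝ) / 2 := by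
    have h1 : (T.card : ℝ) = ∑ p ∈ Finset.range m, (h p : ℝ) := by
      simp [hT, Finset.card_sigma]
    have h2 : ∑ p ∈ Finset.range m, (h p : ℝ) ≤
        ∑ p ∈ Finset.range m, (ellipseArc A B ((p : ℝ) + 1 / 2) + 1 / 2) :=
      Finset.sum_le_sum fun p _ =>
        Nat.floor_le (by linarith [ellipseArc_nonneg (A := A) hB ((p : ℝ) + 1 / 2)])
    rw [Finset.sum_add_distrib, Finset.sum_const, Finset.card_range, nsmul_eq_mul] at h2
    linarith
  have hkR : (k : ℝ) ≤ T.card := by exact_mod_cast hkT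
  have hmA : (m : ℝ) ≤ A + 1 / 2 := Nat.floor_le (by linarith)
  clear_value m
  cases m with
  | zero =>
    simp only [Finset.range_zero, Finset.sum_empty, Nat.cast_zero] at hcard
    have : 0 < Real.pi * A * B / 4 := by positivity
    linarith
  | succ n =>
    push_cast at hmA hcard
    have h1 := sum_ellipseArc_le hA hB n (by linarith)
    have h2 := integral_ellipseArc_le hA hB (x := (n : ℝ) + 1 / 2) (by positivity) (by linarith)
    have h3 := ellipseArc_le (A := A) hB ((n : ℝ) + 1 / 2)
    linarith


open scoped BigOperators

theorem statement_6 (a b : ℝ) (ha : 0 < a) (hb : 0 < b) (k : ℕ)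
    (hk : 1 / 4 + (a * b + 2 * (a + b)) / (4 * Real.pi) ≤ (k : ℝ)) :
    4 * Real.pi * ((k : ℝ) - 1 / 4) / (a * b + 2 * (a + b)) ≤
      cuboidZarembaEig 2 0 0 ![a, b] k := by
  have hπ := Real.pi_pos
  have hC : 0 < (a * b + 2 * (a + b)) / (4 * Real.pi) := by positivity
  have hk0 : (0 : ℝ) < k := by linarith
  unfold cuboidZarembaEig
  apply le_csInf
  · obtain ⟨F, hF⟩ := Infinite.exists_subset_card_eq (Fin 2 → ℕ+) k
    let g : (Fin 2 → ℕ+) → ℝ := fun i => Real.pi ^ 2 * ∑ j : Fin 2,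
        (if (j : ℕ) < 0 then ((i j : ℕ) : ℝ) ^ 2
         else if (j : ℕ) < 0 + 0 then (((i j : ℕ) : ℝ) - 1) ^ 2
         else (((i j : ℕ) : ℝ) - 1 / 2) ^ 2) / (![a, b] j) ^ 2
    obtain ⟨t, ht⟩ := (F.image g).bddAbove
    refine ⟨t, ?_⟩
    have hsub : (F : Set (Fin 2 → ℕ+)) ⊆ {i | g i ≤ t} := fun i hi =>
      ht (Finset.mem_coe.2 (Finset.mem_image_of_mem g hi))
    have h1 := Set.encard_le_encard hsub
    rw [Set.encard_coe_eq_coe_finsetCard, hF] at h1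
    exact h1
  · intro t ht
    simp only [Set.mem_ofPred_eq, Fin.sum_univ_two, Nat.not_lt_zero, if_false, add_zero,
      Matrix.cons_val_zero, Matrix.cons_val_one] at ht
    have ht0 : 0 < t := by
      have hne := Set.one_le_encard_iff_nonempty.1
        (le_trans (by exact_mod_cast (Nat.cast_pos.1 hk0 : 0 < k)) ht)
      obtain ⟨i, hi⟩ := hne
      have h1 : (1 : ℝ) ≤ ((i 0 : ℕ) : ℝ) := by exact_mod_cast (i 0).pos
      have h2 : 0 < ((i 0 : ℕ) : ℝ) - 1 / 2 := by linarith
      refine lt_of_lt_of_le ?_ hi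
      positivity
    set r := Real.sqrt t with hr
    have hr0 : 0 < r := Real.sqrt_pos.2 ht0
    have hrt : r ^ 2 = t := Real.sq_sqrt ht0.le
    have hcount := count_le (A := a * r / Real.pi) (B := b * r / Real.pi) (by positivity)
      (by positivity) _ (fun i hi => by
        simp only [Set.mem_ofPred_eq] at hi
        have e : ((((i 0 : ℕ) : ℝ) - 1 / 2) / (a * r / Real.pi)) ^ 2 +
            ((((i 1 : ℕ) : ℝ) - 1 / 2) / (b * r / Real.pi)) ^ 2 =
            (Real.pi ^ 2 * ((((i 0 : ℕ) : ℝ) - 1 / 2) ^ 2 / a ^ 2 +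
              (((i 1 : ℕ) : ℝ) - 1 / 2) ^ 2 / b ^ 2)) / r ^ 2 := by
          field_simp
        rw [e, hrt]
        exact (div_le_one ht0).2 hi) k ht
    have hform : Real.pi * (a * r / Real.pi) * (b * r / Real.pi) / 4 +
        (a * r / Real.pi + b * r / Real.pi) / 2 + 1 / 4 =
        1 / 4 + (a * b * r ^ 2 + 2 * (a + b) * r) / (4 * Real.pi) := by
      field_simp
      ring
    rw [hform] at hcount
    have hab : 0 < a * b := by positivity
    -- The upper bound on `k` is strictly increasing in `r`, and equals the lower bound at `r = 1`.
    have hr1 : 1 ≤ r := by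
      by_contra! hlt
      have h1 : a * b * r ^ 2 + 2 * (a + b) * r < a * b + 2 * (a + b) := by
        have : r ^ 2 < 1 := by nlinarith
        nlinarith
      have h2 := div_lt_div_of_pos_right h1 (show 0 < 4 * Real.pi by positivity)
      linarith
    rw [div_le_iff₀ (by positivity), ← hrt]
    have h3 : (k : ℝ) - 1 / 4 ≤ (a * b * r ^ 2 + 2 * (a + b) * r) / (4 * Real.pi) := by linarith
    rw [le_div_iff₀ (by positivity)] at h3
    have h4 : (a + b) * r ≤ (a + b) * r ^ 2 := by
      apply mul_le_mul_of_nonneg_left _ (by positivity)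
      nlinarith
    linarith
end
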